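/- Let q ≥ 9 be a prime power that is a perfect square. Then there exists a sequence of pairs (C_i, C_i') of mutually intersecting F_q-linear codes of common lengths n_i → ∞ such that both liminf_{i→∞} dim_{F_q} C_i / n_i and liminf_{i→∞} dim_{F_q} C_i' / n_i are at least 1/2 − 1/(2(q^{1/2} − 1)). -/

import Mathlib

/-!
Put `r = √q`. The codes are evaluation codes on a tower of curves of Garcia–Stichtenoth type over
`F = F_q`, given by `x_j ^ r + x_j = w_j` and `w_{j+1} w_j = x_j ^ (r + 1)`. Level `m` has one
totally ramified place at infinity, about `r ^ m` as its genus, and `N = (r - 1) r ^ m` points given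
by the zeros of `z = w_0 ^ (r - 1) - 1`. All this is set up with bare hands inside an algebraically
closed field `K`, with valuation subrings of `K` in the role of places.

*Functions.* The ring `U m` of functions of level `m` with poles only above `w_0 = 0, ∞` has a basis
`E m d`, `d ∈ ℤ`, of functions with pole order exactly `d` at infinity. In `U m / z` every element
satisfies `a ^ q = a`, so that this quotient is `F ^ n` with `n ≤ N` (`GSTower.exists_ev`): the zeros
of `z` are simple and rational.

*Genus.* Let `RL m t` be the space of functions with no pole but one of order at most `t` at
infinity, and `l(t)` its dimension. Then `t + 1 ≤ l(t) + r ^ m` (`GSTower.RL_finrank`). What has to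
be counted are the conditions of regularity above `w_0 = 0` (`GSTower.codim_Z`). The places there
are sorted by the first index `k` at which the residue `β` of `x_k` is nonzero; it satisfies
`β ^ r + β = 0`. Beyond `k` the tower is reflected: `w_{k+1+i} + β² / w_{k-i}` is regular
(`GSTower.reflect`), so that the poles of `x_{k+1+i}` for `i < k` are those of Laurent polynomials
in `w_0`. From level `2 k + 1` on there is total ramification and the poles are small
(`GSTower.ram_prod`).

*Codes.* Let `2 a ≤ N + t`, and let `Q` be an information set of `RL m t` among the points, split
into halves `Q₁` and `Q₂`. The code `C_i` consists of the values of the functions `v ∈ RL m a`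
vanishing on `Q_i`, with the zero values on `Q_i` replaced by those of `v / z`. If codewords of
`v` and `v'` have disjoint supports, then `v v' = z h` with `h ∈ RL m t` vanishing on `Q`, so `h = 0`
and one of the codewords is zero (`GSTower.exists_codes_aux`). Both dimensions are about
`l(a) - l(t) / 2`. A pigeonhole argument on the degrees `t_{j+1} = ⌊(N + t_j) / 2⌋` yields a pair
`(t, a)` for which this is at least `(N - r ^ m) / 2 - o(N)` (`GSTower.exists_codes`). Since
`n ≤ N = (r - 1) r ^ m`, the rates are at least `1/2 - 1/(2(r - 1)) - o(1)`.
-/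

/-- Two linear codes `C, C' ⊆ Fⁿ` are mutually intersecting if any nonzero codewords
`c ∈ C` and `c' ∈ C'` have intersecting supports. -/
def MutuallyIntersecting {F : Type*} [Field F] {n : ℕ}
    (C C' : Submodule F (Fin n → F)) : Prop :=
  ∀ c ∈ C, c ≠ 0 → ∀ c' ∈ C', c' ≠ 0 → ∃ i : Fin n, c i ≠ 0 ∧ c' i ≠ 0

/-! ### Garcia–Stichtenoth towers and Artin–Schreier equations over valuation rings -/

/-- A tower of Garcia–Stichtenoth type inside a field `K` over the finite field `F` with `r²`
elements: `x_j ^ r + x_j = w_j` and `w_{j+1} w_j = x_j ^ (r + 1)`. The field of level `m` is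
`F(w_0, x_0, …, x_{m-1})`; it is never formed, since every argument takes place in `K`. Places are
valuation subrings of the whole of `K`, and `exists_pole` provides one at which `w_0` has a pole. -/
structure GSTower (F K : Type*) [Field F] [Fintype F] [Field K] [Algebra F K] where
  r : ℕ
  three_le : 3 ≤ r
  card_eq : Fintype.card F = r ^ 2
  add_pow : ∀ a b : K, (a + b) ^ r = a ^ r + b ^ r
  x : ℕ → K
  w : ℕ → K
  hx : ∀ j, x j ^ r + x j = w j
  hw : ∀ j, w (j + 1) * w j = x j ^ (r + 1)
  w_ne : ∀ j, w j ≠ 0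
  exists_pole : ∃ A : ValuationSubring K, w 0 ∉ A

namespace GSTower

variable {F K : Type*} [Field F] [Fintype F] [Field K] [Algebra F K] (T : GSTower F K)

lemma r_pos : 0 < T.r := by have := T.three_le; omega

lemma r_ne : T.r ≠ 0 := T.r_pos.ne'

lemma x_ne (j : ℕ) : T.x j ≠ 0 := by
  intro h
  have := T.hx j
  rw [h, zero_pow T.r_ne, zero_add] at this
  exact T.w_ne j this.symm

lemma neg_pow (a : K) : (-a) ^ T.r = -a ^ T.r := by
  have := T.add_pow a (-a)
  rw [add_neg_cancel, zero_pow T.r_ne] at this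
  linear_combination -this

lemma sub_pow (a b : K) : (a - b) ^ T.r = a ^ T.r - b ^ T.r := by
  rw [sub_eq_add_neg, T.add_pow, T.neg_pow, ← sub_eq_add_neg]

lemma pow_card (a : F) : a ^ (T.r * T.r) = a := by
  have := FiniteField.pow_card a
  rwa [T.card_eq, sq] at this

lemma const_mem (T : GSTower F K) (A : ValuationSubring K) (a : F) : algebraMap F K a ∈ A := by
  rw [← A.valuation_le_one_iff]
  by_contra h
  push Not at h
  have h1 : A.valuation (algebraMap F K a) ^ (T.r * T.r) = A.valuation (algebraMap F K a) := by
    rw [← map_pow, ← map_pow, T.pow_card]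
  have h2 : 1 < T.r * T.r := by nlinarith [T.three_le]
  exact (lt_self_pow₀ h h2).ne' h1

lemma const_val (T : GSTower F K) (A : ValuationSubring K) {a : F} (ha : a ≠ 0) :
    A.valuation (algebraMap F K a) = 1 := by
  apply le_antisymm
  · exact (A.valuation_le_one_iff _).2 (T.const_mem A a)
  · have := (A.valuation_le_one_iff _).2 (T.const_mem A a⁻¹)
    rw [map_inv₀, map_inv₀] at this
    exact (inv_le_one₀ (by simpa [zero_lt_iff] using ha)).1 this

lemma smul_mem (T : GSTower F K) (A : ValuationSubring K) (a : F) {f : K} (hf : f ∈ A) : a • f ∈ A := by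
  rw [Algebra.smul_def]
  exact mul_mem (T.const_mem A a) hf

lemma X_pow_card_sub_X_eq_prod (F : Type*) [Field F] [Fintype F] :
    (Polynomial.X ^ Fintype.card F - Polynomial.X : Polynomial F) =
      ∏ a : F, (Polynomial.X - Polynomial.C a) := by
  have hd := FiniteField.X_pow_card_sub_X_natDegree_eq F (Fintype.one_lt_card (α := F))
  have hr := FiniteField.roots_X_pow_card_sub_X F
  have hm : (Polynomial.X ^ Fintype.card F - Polynomial.X : Polynomial F).Monic := by
    apply Polynomial.monic_X_pow_sub
    rw [Polynomial.degree_X]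
    exact_mod_cast Fintype.one_lt_card (α := F)
  have := Polynomial.prod_multiset_X_sub_C_of_monic_of_roots_card_eq hm (by
    rw [hr, hd]; rfl)
  rw [hr] at this
  exact this.symm

section AS
variable {A : ValuationSubring K} {y c : K}

lemma val_of_one_lt' (h : y ^ T.r + y = c) (hy : 1 < A.valuation y) : A.valuation c = A.valuation y ^ T.r := by
  have h2 : A.valuation y < A.valuation (y ^ T.r) := by
    rw [map_pow]; exact lt_self_pow₀ hy (by have := T.three_le; omega)
  rw [← h, Valuation.map_add_eq_of_lt_left _ h2, map_pow]

/-- An Artin–Schreier root of a function regular at a place is regular there. -/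
lemma mem_of_as (h : y ^ T.r + y = c) (hc : c ∈ A) : y ∈ A := by
  rw [← A.valuation_le_one_iff] at hc ⊢
  by_contra hy
  push Not at hy
  rw [T.val_of_one_lt' h hy] at hc
  exact absurd (one_lt_pow₀ hy T.r_ne) hc.not_gt

lemma val_of_pole (h : y ^ T.r + y = c) (hc : 1 < A.valuation c) :
    1 < A.valuation y ∧ A.valuation y ^ T.r = A.valuation c := by
  have hy : 1 < A.valuation y := by
    by_contra hy
    push Not at hy
    rw [A.valuation_le_one_iff] at hy
    have : c ∈ A := h ▸ A.add_mem _ _ (pow_mem hy _) hy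
    rw [← A.valuation_le_one_iff] at this
    exact this.not_gt hc
  exact ⟨hy, (T.val_of_one_lt' h hy).symm⟩

lemma val_of_zero (h : y ^ T.r + y = c) (hy : A.valuation y < 1) : A.valuation c = A.valuation y := by
  by_cases h0 : y = 0
  · subst h0; rw [← h, zero_pow T.r_ne, zero_add]
  have h2 : A.valuation (y ^ T.r) < A.valuation y := by
    rw [map_pow]
    exact pow_lt_self_of_lt_one₀ (by simpa [zero_lt_iff] using h0) hy
      (by have := T.three_le; omega)
  rw [← h, Valuation.map_add_eq_of_lt_right _ h2]

/-- Where `c` vanishes, `y` has a residue `β ∈ F` with `β ^ r + β = 0`, because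
`y ^ (r²) - y = c ^ r - c` vanishes there too and factors as `∏ (y - a)` over `a ∈ F`. -/
lemma exists_residue (h : y ^ T.r + y = c) (hc : A.valuation c < 1) :
    ∃ β : F, β ^ T.r + β = 0 ∧ A.valuation (y - algebraMap F K β) < 1 := by
  have hyA : y ∈ A := T.mem_of_as h ((A.valuation_le_one_iff _).1 hc.le)
  have h1 : y ^ (T.r * T.r) - y = c ^ T.r - c := by
    rw [← h, T.add_pow, ← pow_mul]; ring
  have h2 : A.valuation (y ^ (T.r * T.r) - y) < 1 := by
    rw [h1]
    refine (A.valuation.map_sub _ _).trans_lt (max_lt ?_ hc)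
    rw [map_pow]; exact pow_lt_one₀ zero_le hc T.r_ne
  have h3 : y ^ (T.r * T.r) - y = ∏ a : F, (y - algebraMap F K a) := by
    have := congrArg (Polynomial.aeval y) (X_pow_card_sub_X_eq_prod F)
    simpa [T.card_eq, sq, map_prod] using this
  rw [h3, map_prod] at h2
  obtain ⟨β, hβ⟩ : ∃ β : F, A.valuation (y - algebraMap F K β) < 1 := by
    by_contra hcon
    push Not at hcon
    refine h2.not_ge ?_
    exact Finset.one_le_prod'' hcon
  refine ⟨β, ?_, hβ⟩
  by_contra hne
  have h4 := T.const_val A hne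
  have h5 : algebraMap F K (β ^ T.r + β) = c - ((y - algebraMap F K β) ^ T.r + (y - algebraMap F K β)) := by
    rw [T.sub_pow, ← h]; simp; ring
  rw [h5] at h4
  refine h4.not_lt ?_
  refine (A.valuation.map_sub _ _).trans_lt (max_lt hc ?_)
  rw [T.val_of_zero rfl hβ]
  exact hβ

end AS

end GSTower

/-! ### Places above `w₀ = 0` and the reflection of poles -/

namespace GSTower

variable {F K : Type*} [Field F] [Fintype F] [Field K] [Algebra F K] (T : GSTower F K)

lemma one_add_ne (j : ℕ) : 1 + T.x j ^ (T.r - 1) ≠ 0 := by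
  intro h
  have h1 := T.hx j
  have h2 : T.x j ^ T.r = T.x j ^ (T.r - 1) * T.x j := by
    rw [← pow_succ]; congr 1; have := T.r_pos; omega
  rw [h2] at h1
  exact T.w_ne j (by rw [← h1]; linear_combination T.x j * h)

lemma w_eq (j : ℕ) : T.w j = T.x j * (1 + T.x j ^ (T.r - 1)) := by
  have h2 : T.x j ^ T.r = T.x j ^ (T.r - 1) * T.x j := by
    rw [← pow_succ]; congr 1; have := T.r_pos; omega
  rw [← T.hx, h2]; ring

lemma inv_x_eq (j : ℕ) : (T.x j)⁻¹ = (1 + T.x j ^ (T.r - 1)) * (T.w j)⁻¹ := by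
  have h1 := T.x_ne j
  have h2 := T.one_add_ne j
  rw [w_eq]; field_simp

lemma w_succ_eq (j : ℕ) : T.w (j + 1) = T.x j - T.x j ^ 2 / T.w j := by
  have h := T.w_ne j
  field_simp
  rw [T.hw, ← T.hx]; ring

lemma w_succ_eq' (j : ℕ) : T.w (j + 1) = T.x j ^ T.r / (1 + T.x j ^ (T.r - 1)) := by
  have h1 := T.x_ne j
  have h2 := T.one_add_ne j
  have h := T.hw j
  rw [T.w_eq j] at h
  field_simp
  apply mul_right_cancel₀ h1
  rw [← pow_succ, ← h]; ring

lemma inv_w_succ_eq (j : ℕ) : (T.w (j + 1))⁻¹ = (T.x j)⁻¹ + (T.x j ^ T.r)⁻¹ := by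
  have h1 := T.x_ne j
  have h2 := T.one_add_ne j
  have h3 : T.x j ^ T.r = T.x j ^ (T.r - 1) * T.x j := by
    rw [← pow_succ]; congr 1; have := T.r_pos; omega
  rw [w_succ_eq', h3]; field_simp; ring

/-- The places at which `w 0` and `x 0, …, x (k - 1)` all vanish; `Z 0` consists of all places
above `w 0 = 0`. -/
def Z (k : ℕ) : Set (ValuationSubring K) :=
  {A | A.valuation (T.w 0) < 1 ∧ ∀ i < k, A.valuation (T.x i) < 1}

/-- The branch of `Z k` at which `x k` has residue `β`. The branch `β = 0` is `Z (k + 1)`. -/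
def Br (k : ℕ) (β : F) : Set (ValuationSubring K) :=
  {A | A ∈ T.Z k ∧ A.valuation (T.x k - algebraMap F K β) < 1}

section
variable {T} {A : ValuationSubring K} {k : ℕ}

lemma Z.val_x (hA : A ∈ T.Z k) {i : ℕ} (hi : i < k) :
    A.valuation (T.x i) = A.valuation (T.w i) :=
  (T.val_of_zero (T.hx i) (hA.2 i hi)).symm

lemma val_pos (A : ValuationSubring K) {f : K} (hf : f ≠ 0) : 0 < A.valuation f := by
  simpa [zero_lt_iff] using hf

lemma Z.val_w_succ (hA : A ∈ T.Z k) {i : ℕ} (hi : i < k) :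
    A.valuation (T.w (i + 1)) = A.valuation (T.w i) ^ T.r := by
  have h := congrArg A.valuation (T.hw i)
  rw [map_mul, map_pow, Z.val_x hA hi, pow_succ] at h
  exact mul_right_cancel₀ (val_pos A (T.w_ne i)).ne' h

lemma Z.val_w_le (hA : A ∈ T.Z k) {i : ℕ} (hi : i ≤ k) :
    A.valuation (T.w i) ≤ A.valuation (T.w 0) := by
  induction i with
  | zero => exact le_rfl
  | succ i ih =>
    have := ih (by omega)
    rw [Z.val_w_succ hA (by omega)]
    exact (pow_le_of_le_one zero_le (this.trans hA.1.le) T.r_ne).trans this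

lemma Z.val_w_lt (hA : A ∈ T.Z k) {i : ℕ} (hi : i ≤ k) : A.valuation (T.w i) < 1 :=
  (Z.val_w_le hA hi).trans_lt hA.1

lemma Z.cover (hA : A ∈ T.Z k) :
    A ∈ T.Z (k + 1) ∨ ∃ β : F, β ≠ 0 ∧ β ^ T.r + β = 0 ∧ A ∈ T.Br k β := by
  obtain ⟨β, h1, h2⟩ := T.exists_residue (T.hx k) (Z.val_w_lt hA le_rfl)
  by_cases h0 : β = 0
  · left
    refine ⟨hA.1, fun i hi => ?_⟩
    rcases Nat.lt_succ_iff_lt_or_eq.1 hi with h | rfl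
    · exact hA.2 i h
    · simpa [h0] using h2
  · exact .inr ⟨β, h0, h1, hA, h2⟩

lemma sq_pow_eq {β : F} (hβ : β ^ T.r + β = 0) :
    (algebraMap F K β ^ 2) ^ T.r = algebraMap F K β ^ 2 := by
  rw [← map_pow, ← map_pow, ← pow_mul, mul_comm, pow_mul, eq_neg_of_add_eq_zero_left hβ, neg_sq]

lemma val_eq_of_as_sub {β : F} (hβ : β ^ T.r + β = 0) (hA : A ∈ T.Br k β) :
    A.valuation (T.x k - algebraMap F K β) = A.valuation (T.w k) := by
  refine (T.val_of_zero ?_ hA.2).symm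
  rw [T.sub_pow, ← T.hx, ← map_pow, eq_neg_of_add_eq_zero_left hβ, map_neg]; ring

lemma div_mem_of_val_le {f g : K} (hg : g ≠ 0) (h : A.valuation f ≤ A.valuation g) :
    f / g ∈ A := by
  rw [← A.valuation_le_one_iff, map_div₀]
  exact (div_le_one₀ (val_pos A hg)).2 h

/-- The step of the reflection from the `w` to the `x`: both `T.x i` and `β² / T.x j` are
Artin–Schreier roots, of `T.w i` and `β² / T.w (j + 1)`, since `(β²) ^ r = β²`. -/
lemma reflect_x {β : F} (hβ : β ^ T.r + β = 0) {i j : ℕ}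
    (h : T.w i + algebraMap F K β ^ 2 / T.w (j + 1) ∈ A) :
    T.x i + algebraMap F K β ^ 2 / T.x j ∈ A := by
  refine T.mem_of_as ?_ h
  rw [T.add_pow, div_pow, sq_pow_eq hβ, ← T.hx i, div_eq_mul_inv _ (T.w _), T.inv_w_succ_eq]
  ring

/-- Reflection at a branch with `β ≠ 0`: going up the tower from level `k + 1`, the poles of the
`w`'s are those of `-β² / w` going down from level `k`. -/
lemma reflect {β : F} (h0 : β ≠ 0) (hβ : β ^ T.r + β = 0) (hA : A ∈ T.Br k β) (i j : ℕ)
    (hij : i + j = k) : T.w (k + 1 + i) + algebraMap F K β ^ 2 / T.w j ∈ A := by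
  have hβ1 : A.valuation (algebraMap F K β) = 1 := T.const_val A h0
  have hβA : algebraMap F K β ∈ A := T.const_mem A β
  induction i generalizing j with
  | zero =>
    obtain rfl : j = k := by omega
    have h1 : T.w (j + 1 + 0) + algebraMap F K β ^ 2 / T.w j
        = T.x j - (T.x j - algebraMap F K β) / T.w j * (T.x j + algebraMap F K β) := by
      rw [add_zero, w_succ_eq]; ring
    rw [h1]
    have hx : T.x j ∈ A := by
      have := A.add_mem _ _ ((A.valuation_le_one_iff _).1 hA.2.le) hβA
      simpa using this
    exact sub_mem hx (mul_mem (div_mem_of_val_le (T.w_ne j) (val_eq_of_as_sub hβ hA).le)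
      (add_mem hx hβA))
  | succ i ih =>
    have hy := reflect_x hβ (ih (j + 1) (by omega))
    have hu : A.valuation (T.x j) < 1 := hA.1.2 j (by omega)
    set b := algebraMap F K β with hb
    set u := T.x j with hu_def
    set x := T.x (k + 1 + i) with hx_def
    set y := x + b ^ 2 / u with hy_def
    have hu0 : u ≠ 0 := T.x_ne j
    have huA : u ∈ A := (A.valuation_le_one_iff _).1 hu.le
    have hdef : u * x = u * y - b ^ 2 := by rw [hy_def]; field_simp; ring
    set d := u * x with hd_def
    have hdA : d ∈ A := by rw [hdef]; exact sub_mem (mul_mem huA hy) (pow_mem hβA _)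
    have hvd : A.valuation d = 1 := by
      rw [hdef, sub_eq_add_neg, Valuation.map_add_eq_of_lt_right]
      · rw [Valuation.map_neg, map_pow, hβ1, one_pow]
      · rw [Valuation.map_neg, map_mul, map_pow, hβ1, one_pow]
        exact mul_lt_one_of_lt_of_le hu ((A.valuation_le_one_iff _).2 hy)
    obtain ⟨s, hs⟩ : ∃ s, T.r = s + 3 := ⟨T.r - 3, by have := T.three_le; omega⟩
    have hvu : A.valuation (u ^ (s + 2)) < 1 := by
      rw [map_pow]; exact pow_lt_one₀ zero_le hu (by omega)
    have hv1 : A.valuation (1 + u ^ (s + 2)) = 1 := Valuation.map_one_add_of_lt _ hvu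
    have hv2 : A.valuation (d ^ (s + 2) + u ^ (s + 2)) = 1 := by
      rw [Valuation.map_add_eq_of_lt_left]
      · rw [map_pow, hvd, one_pow]
      · rwa [map_pow _ d, hvd, one_pow]
    have hn1 : 1 + u ^ (s + 2) ≠ 0 := by
      intro h; rw [h, map_zero] at hv1; exact zero_ne_one hv1
    have hn2 : d ^ (s + 2) + u ^ (s + 2) ≠ 0 := by
      intro h; rw [h, map_zero] at hv2; exact zero_ne_one hv2
    have hxd : x = d / u := by rw [hd_def]; field_simp
    have hn3 : 1 + x ^ (s + 2) ≠ 0 := by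
      have := T.one_add_ne (k + 1 + i)
      rwa [hs] at this
    have key : T.w (k + 1 + (i + 1)) + b ^ 2 / T.w j =
        (d ^ (s + 2) * y + u ^ (s + 1) * (d ^ (s + 3) + b ^ 2)) /
          ((d ^ (s + 2) + u ^ (s + 2)) * (1 + u ^ (s + 2))) := by
      rw [← add_assoc, T.w_succ_eq', T.w_eq j, ← hx_def, ← hu_def, hs]
      simp only [show s + 3 - 1 = s + 2 by omega]
      have e1 : x ^ (s + 3) / (1 + x ^ (s + 2)) = d ^ (s + 3) / (u * (d ^ (s + 2) + u ^ (s + 2))) := by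
        rw [div_eq_div_iff hn3 (mul_ne_zero hu0 hn2), hd_def]; ring
      rw [e1]
      have e2 : u * y = d + b ^ 2 := by rw [hdef]; ring
      rw [div_add_div _ _ (mul_ne_zero hu0 hn2) (mul_ne_zero hu0 hn1), div_eq_div_iff
        (mul_ne_zero (mul_ne_zero hu0 hn2) (mul_ne_zero hu0 hn1)) (mul_ne_zero hn2 hn1)]
      linear_combination (-(u * d ^ (s + 2)) * (d ^ (s + 2) + u ^ (s + 2)) * (1 + u ^ (s + 2))) * e2
    rw [key]
    refine div_mem_of_val_le (mul_ne_zero hn2 hn1) ?_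
    rw [map_mul, hv1, hv2, one_mul, A.valuation_le_one_iff]
    exact add_mem (mul_mem (pow_mem hdA _) hy)
      (mul_mem (pow_mem huA _) (add_mem (pow_mem hdA _) (pow_mem hβA _)))

/-- The reflection reaches the bottom of the tower at level `2 * k + 1`. -/
lemma val_reflect {β : F} (h0 : β ≠ 0) (hβ : β ^ T.r + β = 0) (hA : A ∈ T.Br k β) :
    A.valuation (T.w (2 * k + 1)) = (A.valuation (T.w 0))⁻¹ := by
  have h := reflect h0 hβ hA k 0 rfl
  have h1 : A.valuation (algebraMap F K β ^ 2 / T.w 0) = (A.valuation (T.w 0))⁻¹ := by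
    rw [map_div₀, map_pow, T.const_val A h0, one_pow, one_div]
  have h2 : 1 < (A.valuation (T.w 0))⁻¹ := (one_lt_inv₀ (val_pos A (T.w_ne 0))).2 hA.1.1
  have h3 : T.w (2 * k + 1) = (T.w (k + 1 + k) + algebraMap F K β ^ 2 / T.w 0)
      - algebraMap F K β ^ 2 / T.w 0 := by
    rw [add_sub_cancel_right]; congr 1; omega
  rw [h3, Valuation.map_sub_eq_of_lt_right, h1]
  rw [h1]
  exact ((A.valuation_le_one_iff _).2 h).trans_lt h2

/-- Above a pole of `w j` the step from `w j` to `w (j + 1)` is totally ramified of degree `r`. -/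
lemma ram {j : ℕ} (h : 1 < A.valuation (T.w j)) :
    A.valuation (T.x j) ^ T.r = A.valuation (T.w j) ∧
    A.valuation (T.w (j + 1)) = A.valuation (T.x j) ∧ 1 < A.valuation (T.w (j + 1)) := by
  obtain ⟨h1, h2⟩ := T.val_of_pole (T.hx j) h
  have h3 := congrArg A.valuation (T.hw j)
  rw [map_mul, map_pow, pow_succ', h2] at h3
  have h4 := mul_right_cancel₀ (val_pos A (T.w_ne j)).ne' h3
  exact ⟨h2, h4, h4 ▸ h1⟩

/-- Beyond a pole of `w j`, a monomial in the `x`'s with exponents below `r` has a pole no larger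
than that of `w j`. -/
lemma ram_prod {j : ℕ} (h : 1 < A.valuation (T.w j)) (J : ℕ → ℕ) (hJ : ∀ i, J i < T.r) (s : ℕ) :
    1 < A.valuation (T.w (j + s)) ∧
    (A.valuation (T.w j))⁻¹ * ∏ i ∈ Finset.range s, A.valuation (T.x (j + i)) ^ J i ≤
      (A.valuation (T.w (j + s)))⁻¹ := by
  induction s with
  | zero => exact ⟨h, by simp⟩
  | succ s ih =>
    obtain ⟨h1, h2, h3⟩ := ram ih.1
    refine ⟨h3, ?_⟩
    rw [Finset.prod_range_succ, ← mul_assoc]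
    refine (mul_le_mul' ih.2 le_rfl).trans ?_
    rw [← add_assoc, h2, ← h1]
    rw [h2] at h3
    have hpos : 0 < A.valuation (T.x (j + s)) := zero_lt_one.trans h3
    have h4 : A.valuation (T.x (j + s)) ^ T.r =
        A.valuation (T.x (j + s)) ^ (T.r - 1) * A.valuation (T.x (j + s)) := by
      rw [← pow_succ]; congr 1; have := T.r_pos; omega
    have h5 : A.valuation (T.x (j + s)) ^ J s ≤ A.valuation (T.x (j + s)) ^ (T.r - 1) :=
      pow_le_pow_right₀ h3.le (by have := hJ s; omega)
    rw [h4, mul_inv, mul_right_comm]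
    refine mul_le_of_le_one_left zero_le ?_
    rw [inv_mul_le_one₀ (pow_pos hpos _)]
    exact h5

end

end GSTower

/-! ### `w₀`-adic approximation by polynomials -/

namespace GSTower

variable {F K : Type*} [Field F] [Fintype F] [Field K] [Algebra F K] (T : GSTower F K)

/-- The polynomial ring `F[w]`. -/
def P : Subalgebra F K := Algebra.adjoin F {T.w 0}

lemma w_mem_P : T.w 0 ∈ T.P := Algebra.subset_adjoin rfl

lemma P_mem {A : ValuationSubring K} (hA : T.w 0 ∈ A) {p : K} (hp : p ∈ T.P) : p ∈ A := by
  induction hp using Algebra.adjoin_induction with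
  | mem x hx => rw [Set.mem_singleton_iff.1 hx]; exact hA
  | algebraMap a => exact T.const_mem A a
  | add _ _ _ _ h1 h2 => exact add_mem h1 h2
  | mul _ _ _ _ h1 h2 => exact mul_mem h1 h2

variable {T} in
lemma Z.w_mem {A : ValuationSubring K} {k : ℕ} (hA : A ∈ T.Z k) : T.w 0 ∈ A :=
  (A.valuation_le_one_iff _).1 hA.1.le

variable {T} in
lemma Z.zero {A : ValuationSubring K} {k : ℕ} (hA : A ∈ T.Z k) : A ∈ T.Z 0 :=
  ⟨hA.1, fun _ h => absurd h (by omega)⟩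

/-- The functions that can be approximated by polynomials in `w = w 0` to any `w`-adic precision,
uniformly over the places of `Z` above `w = 0`. -/
def App (Z : Set (ValuationSubring K)) : Subalgebra F K where
  carrier := {f | ∀ J : ℕ, ∃ p ∈ T.P, ∀ A ∈ Z, A ∈ T.Z 0 → (f - p) / T.w 0 ^ J ∈ A}
  algebraMap_mem' a J := ⟨_, T.P.algebraMap_mem a, fun A _ _ => by simp⟩
  add_mem' {f g} hf hg J := by
    obtain ⟨p, hp, h1⟩ := hf J
    obtain ⟨s, hs, h2⟩ := hg J
    refine ⟨p + s, add_mem hp hs, fun A hA hA0 => ?_⟩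
    have := add_mem (h1 A hA hA0) (h2 A hA hA0)
    convert this using 1; ring
  mul_mem' {f g} hf hg J := by
    obtain ⟨p, hp, h1⟩ := hf J
    obtain ⟨s, hs, h2⟩ := hg J
    refine ⟨p * s, mul_mem hp hs, fun A hA hA0 => ?_⟩
    have hwA := GSTower.Z.w_mem hA0
    have hpA := T.P_mem hwA hp
    have hgA : g ∈ A := by
      have := add_mem (mul_mem (h2 A hA hA0) (pow_mem hwA J)) (T.P_mem hwA hs)
      rwa [div_mul_cancel₀ _ (pow_ne_zero _ (T.w_ne 0)), sub_add_cancel] at this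
    have := add_mem (mul_mem (h1 A hA hA0) hgA) (mul_mem (h2 A hA hA0) hpA)
    convert this using 1; ring

lemma P_le_App (Z : Set (ValuationSubring K)) : T.P ≤ T.App Z :=
  fun f hf _ => ⟨f, hf, fun A _ _ => by simp⟩

lemma w_mem_App (Z : Set (ValuationSubring K)) : T.w 0 ∈ T.App Z := T.P_le_App Z T.w_mem_P

variable {T} {Z : Set (ValuationSubring K)}

lemma App_anti {Z' : Set (ValuationSubring K)} (h : Z ⊆ Z') : T.App Z' ≤ T.App Z := by
  intro f hf J
  obtain ⟨p, hp, h1⟩ := hf J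
  exact ⟨p, hp, fun A hA => h1 A (h hA)⟩

lemma App_closed {f : K} (h : ∀ J : ℕ, ∃ g ∈ T.App Z, ∀ A ∈ Z, A ∈ T.Z 0 →
    A.valuation (f - g) ≤ A.valuation (T.w 0) ^ J) : f ∈ T.App Z := by
  intro J
  obtain ⟨g, hg, h1⟩ := h J
  obtain ⟨p, hp, h2⟩ := hg J
  refine ⟨p, hp, fun A hA hA0 => ?_⟩
  have h3 : (f - g) / T.w 0 ^ J ∈ A :=
    div_mem_of_val_le (pow_ne_zero _ (T.w_ne 0)) (by rw [map_pow]; exact h1 A hA hA0)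
  convert add_mem h3 (h2 A hA hA0) using 1; ring

lemma App_inv {a : K} (ha : a ∈ T.App Z)
    (hv : ∀ A ∈ Z, A ∈ T.Z 0 → A.valuation a ≤ A.valuation (T.w 0)) (hne : 1 + a ≠ 0) :
    (1 + a)⁻¹ ∈ T.App Z := by
  refine App_closed fun J => ⟨∑ i ∈ Finset.range J, (-a) ^ i,
    sum_mem fun i _ => pow_mem (neg_mem ha) i, fun A hA hA0 => ?_⟩
  have h1 : (1 + a)⁻¹ - ∑ i ∈ Finset.range J, (-a) ^ i = (-a) ^ J * (1 + a)⁻¹ := by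
    have := geom_sum_mul (-a) J
    field_simp
    linear_combination this
  have h2 := hv A hA hA0
  rw [h1, map_mul, map_inv₀, Valuation.map_one_add_of_lt _ (h2.trans_lt hA0.1), inv_one, mul_one,
    map_pow, Valuation.map_neg]
  exact pow_le_pow_left₀ zero_le h2 J

/-- Approximability of a small Artin–Schreier root `x`, by iterating `x = c - x ^ r`. -/
lemma App_as {c x : K} (hc : c ∈ T.App Z) (h : x ^ T.r + x = c)
    (hv : ∀ A ∈ Z, A ∈ T.Z 0 → A.valuation c ≤ A.valuation (T.w 0))
    (hx : ∀ A ∈ Z, A ∈ T.Z 0 → A.valuation x < 1) : x ∈ T.App Z := by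
  have key : ∀ J : ℕ, ∃ g ∈ T.App Z, ∀ A ∈ Z, A ∈ T.Z 0 →
      A.valuation (x - g) ≤ A.valuation (T.w 0) ^ (J + 1) := by
    intro J
    induction J with
    | zero =>
      refine ⟨0, zero_mem _, fun A hA hA0 => ?_⟩
      rw [sub_zero, zero_add, pow_one, ← T.val_of_zero h (hx A hA hA0)]
      exact hv A hA hA0
    | succ J ih =>
      obtain ⟨g, hg, h1⟩ := ih
      refine ⟨c - g ^ T.r, sub_mem hc (pow_mem hg _), fun A hA hA0 => ?_⟩
      have h2 : x - (c - g ^ T.r) = -(x - g) ^ T.r := by rw [T.sub_pow, ← h]; ring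
      rw [h2, Valuation.map_neg, map_pow]
      refine (pow_le_pow_left₀ zero_le (h1 A hA hA0) T.r).trans ?_
      rw [← pow_mul]
      exact pow_le_pow_of_le_one zero_le hA0.1.le (by nlinarith [T.three_le])
  refine App_closed fun J => ?_
  obtain ⟨g, hg, h1⟩ := key J
  exact ⟨g, hg, fun A hA hA0 => (h1 A hA hA0).trans
    (pow_le_pow_of_le_one zero_le hA0.1.le (by omega))⟩

lemma tower_mem_App (k : ℕ) :
    ∀ i, (i ≤ k → T.w i ∈ T.App (T.Z k)) ∧ (i < k → T.x i ∈ T.App (T.Z k)) := by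
  have step : ∀ i, i < k → T.w i ∈ T.App (T.Z k) → T.x i ∈ T.App (T.Z k) := fun i hi h =>
    App_as h (T.hx i) (fun A hA _ => Z.val_w_le hA hi.le) (fun A hA _ => hA.2 i hi)
  intro i
  induction i with
  | zero => exact ⟨fun _ => T.w_mem_App _, fun h => step 0 h (T.w_mem_App _)⟩
  | succ i ih =>
    have h1 : i + 1 ≤ k → T.w (i + 1) ∈ T.App (T.Z k) := by
      intro hi
      have hx := ih.2 (by omega)
      rw [w_succ_eq', div_eq_mul_inv]
      refine mul_mem (pow_mem hx _) (App_inv (pow_mem hx _) (fun A hA _ => ?_) (T.one_add_ne i))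
      rw [map_pow, Z.val_x hA (by omega)]
      have h2 := Z.val_w_le hA (i := i) (by omega)
      exact (pow_le_of_le_one zero_le (h2.trans hA.1.le)
        (by have := T.three_le; omega)).trans h2
    exact ⟨h1, fun h => step _ h (h1 h.le)⟩

lemma x_mem_App_Br (k : ℕ) {β : F} (hβ : β ^ T.r + β = 0) : T.x k ∈ T.App (T.Br k β) := by
  have h : T.x k - algebraMap F K β ∈ T.App (T.Br k β) := by
    refine App_as (c := T.w k) (App_anti (fun A hA => hA.1) ((tower_mem_App k k).1 le_rfl)) ?_
      (fun A hA _ => Z.val_w_le hA.1 le_rfl) (fun A hA _ => hA.2)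
    rw [T.sub_pow, ← T.hx, ← map_pow, eq_neg_of_add_eq_zero_left hβ, map_neg]; ring
  simpa using add_mem h ((T.App (T.Br k β)).algebraMap_mem β)

lemma inv_mem_App (k : ℕ) :
    ∀ i ≤ k, ∃ N : ℕ, T.w 0 ^ N * (T.w i)⁻¹ ∈ T.App (T.Z k) ∧
      (i < k → T.w 0 ^ N * (T.x i)⁻¹ ∈ T.App (T.Z k)) := by
  have step : ∀ i N, T.w 0 ^ N * (T.w i)⁻¹ ∈ T.App (T.Z k) → 
      (i < k → T.w 0 ^ N * (T.x i)⁻¹ ∈ T.App (T.Z k)) := by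
    intro i N h hi
    rw [T.inv_x_eq, mul_left_comm]
    exact mul_mem (add_mem (one_mem _) (pow_mem ((tower_mem_App k i).2 hi) _)) h
  intro i
  induction i with
  | zero =>
    intro _
    have h : T.w 0 ^ 1 * (T.w 0)⁻¹ ∈ T.App (T.Z k) := by
      rw [pow_one, mul_inv_cancel₀ (T.w_ne 0)]; exact one_mem _
    exact ⟨1, h, step 0 1 h⟩
  | succ i ih =>
    intro hi
    obtain ⟨N, -, h1⟩ := ih (by omega)
    have h1 := h1 (by omega)
    have h : T.w 0 ^ (N * T.r) * (T.w (i + 1))⁻¹ ∈ T.App (T.Z k) := by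
      have e : T.w 0 ^ (N * T.r) * (T.w (i + 1))⁻¹ =
          T.w 0 ^ (N * (T.r - 1)) * (T.w 0 ^ N * (T.x i)⁻¹) + (T.w 0 ^ N * (T.x i)⁻¹) ^ T.r := by
        rw [T.inv_w_succ_eq]
        have : N * T.r = N * (T.r - 1) + N := by
          obtain ⟨s, hs⟩ : ∃ s, T.r = s + 1 := ⟨T.r - 1, by have := T.r_pos; omega⟩
          rw [hs]; simp; ring
        rw [mul_pow, ← pow_mul, inv_pow, ← mul_assoc, ← pow_add, ← this, mul_add]
      rw [e]
      exact add_mem (mul_mem (pow_mem (T.w_mem_App _) _) h1) (pow_mem h1 _)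
    exact ⟨_, h, step _ _ h⟩

/-- On `Z k` the function `b / x i` has the same principal part as a Laurent polynomial in `w 0`,
the same one for all places of `Z k`. -/
lemma exists_principal_part (k i : ℕ) (hi : i < k) (b : F) :
    ∃ (N : ℕ), ∃ p ∈ T.P, ∀ A ∈ T.Z k, algebraMap F K b / T.x i - p / T.w 0 ^ N ∈ A := by
  obtain ⟨N, -, h⟩ := inv_mem_App (T := T) k i hi.le
  obtain ⟨p, hp, h1⟩ := (T.App (T.Z k)).smul_mem (h hi) b N
  refine ⟨N, p, hp, fun A hA => ?_⟩
  convert h1 A hA (Z.zero hA) using 1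
  rw [Algebra.smul_def]
  have := T.w_ne 0
  have := T.x_ne i
  field_simp

end GSTower

/-! ### Codimension bounds from triangular systems -/

section Codim
variable {F V : Type*} [Field F] [AddCommGroup V] [Module F V]

/-- `M ∩ S` is cut out of `M` by at most `D` linear functionals, all of which vanish on `S`. -/
def CodimLE (M S : Submodule F V) (D : ℕ) : Prop :=
  ∃ (ι : Type) (_ : Fintype ι) (φ : V →ₗ[F] (ι → F)), Fintype.card ι ≤ D ∧
    (∀ s ∈ S, φ s = 0) ∧ ∀ f ∈ M, φ f = 0 → f ∈ S

lemma CodimLE.mono {M M' S : Submodule F V} {D D' : ℕ} (h : CodimLE M' S D) (hM : M ≤ M' ⊔ S)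
    (hD : D ≤ D') : CodimLE M S D' := by
  obtain ⟨ι, _, φ, h1, h2, h3⟩ := h
  refine ⟨ι, _, φ, h1.trans hD, h2, fun f hf h0 => ?_⟩
  obtain ⟨g, hg, s, hs, rfl⟩ := Submodule.mem_sup.1 (hM hf)
  rw [map_add, h2 s hs, add_zero] at h0
  exact add_mem (h3 g hg h0) hs

lemma CodimLE.iInf {κ : Type*} [Fintype κ] {M : Submodule F V} {S : κ → Submodule F V} {D : ℕ}
    (h : ∀ i, CodimLE M (S i) D) : CodimLE M (⨅ i, S i) (Fintype.card κ * D) := by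
  choose ι hι φ h1 h2 h3 using h
  let e := (Fintype.equivFin κ).symm
  refine ⟨Σ i : Fin (Fintype.card κ), ι (e i), inferInstance,
    LinearMap.pi fun a => (LinearMap.proj a.2).comp (φ (e a.1)), ?_, ?_, ?_⟩
  · rw [Fintype.card_sigma]
    refine (Finset.sum_le_card_nsmul _ _ D fun i _ => h1 _).trans ?_
    simp
  · intro s hs
    ext a
    have := h2 (e a.1) s ((Submodule.mem_iInf _).1 hs _)
    simp [this]
  · intro f hf h0
    rw [Submodule.mem_iInf]
    intro i
    obtain ⟨j, rfl⟩ := e.surjective i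
    refine h3 _ f hf ?_
    ext a
    exact congrFun h0 ⟨j, a⟩

lemma codimLE_of_span {ι : Type*} [Fintype ι] {M S : Submodule F V} (g : ι → V)
    (h : M ≤ S ⊔ Submodule.span F (Set.range g)) : CodimLE M S (Fintype.card ι) := by
  let W : Submodule F (V ⧸ S) := Submodule.span F (Set.range (S.mkQ ∘ g))
  have : Module.Finite F W := FiniteDimensional.span_of_finite F (Set.finite_range _)
  obtain ⟨π, hπ⟩ := LinearMap.exists_leftInverse_of_injective W.subtype W.ker_subtype
  let b := Module.finBasis F W
  refine ⟨Fin (Module.finrank F W), inferInstance,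
    b.equivFun.toLinearMap.comp (π.comp S.mkQ), ?_, ?_, ?_⟩
  · rw [Fintype.card_fin]; exact finrank_range_le_card _
  · intro s hs
    have : S.mkQ s = 0 := by simpa using hs
    simp only [LinearMap.comp_apply, this, map_zero]
  · intro f hf h0
    have h4 : S.mkQ f ∈ W := by
      obtain ⟨s, hs, t, ht, rfl⟩ := Submodule.mem_sup.1 (h hf)
      have : S.mkQ s = 0 := by simpa using hs
      rw [map_add, this, zero_add]
      have := Submodule.mem_map_of_mem (f := S.mkQ) ht
      rwa [Submodule.map_span, ← Set.range_comp] at this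
    have h5 : π (S.mkQ f) = 0 := by
      apply b.equivFun.injective
      rw [map_zero]; exact h0
    have h6 := LinearMap.congr_fun hπ ⟨S.mkQ f, h4⟩
    simp only [LinearMap.comp_apply, Submodule.subtype_apply, LinearMap.id_apply] at h6
    rw [h5] at h6
    have h7 : S.mkQ f = 0 := (congrArg Subtype.val h6).symm
    simpa using h7
end Codim

namespace GSTower

variable {F K : Type*} [Field F] [Fintype F] [Field K] [Algebra F K] (T : GSTower F K)

/-- Laurent polynomials in `w`. -/
def Lau : Subalgebra F K where
  carrier := {f | ∃ N : ℕ, T.w 0 ^ N * f ∈ T.P}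
  algebraMap_mem' a := ⟨0, by simp⟩
  add_mem' := by
    rintro f g ⟨N, hN⟩ ⟨M, hM⟩
    refine ⟨N + M, ?_⟩
    convert add_mem (mul_mem (pow_mem T.w_mem_P M) hN) (mul_mem (pow_mem T.w_mem_P N) hM) using 1
    ring
  mul_mem' := by
    rintro f g ⟨N, hN⟩ ⟨M, hM⟩
    refine ⟨N + M, ?_⟩
    convert mul_mem hN hM using 1
    ring

lemma mem_P_iff {p : K} (hp : p ∈ T.P) : p ∈ Submodule.span F (Set.range fun i : ℕ => T.w 0 ^ i) := by
  have h := Algebra.adjoin_eq_span (R := F) {T.w 0}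
  have hp' : p ∈ Subalgebra.toSubmodule (Algebra.adjoin F {T.w 0}) := hp
  rw [h, Submonoid.powers_eq_closure (T.w 0) |>.symm] at hp'
  exact hp'

/-- The monomial `∏ X i ^ I i`, with exponents below `r`. -/
def mon {n : ℕ} (X : ℕ → K) (I : Fin n → Fin T.r) : K := ∏ i : Fin n, X i ^ (I i : ℕ)

/-- The total degree of the monomial with exponents `I`. -/
def ht {n : ℕ} (I : Fin n → Fin T.r) : ℕ := ∑ i, (I i : ℕ)

lemma mon_succ {n : ℕ} (X : ℕ → K) (I : Fin (n + 1) → Fin T.r) :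
    T.mon X I = X 0 ^ (I 0 : ℕ) * T.mon (fun i => X (i + 1)) (Fin.tail I) := by
  simp [mon, Fin.prod_univ_succ, Fin.tail]

lemma ht_succ {n : ℕ} (I : Fin (n + 1) → Fin T.r) :
    T.ht I = (I 0 : ℕ) + T.ht (Fin.tail I) := by
  simp [ht, Fin.sum_univ_succ, Fin.tail]

/-- The span of the `w ^ c * X^I` with `c ≥ -N`, where `w = w 0`. -/
def Lam (n : ℕ) (X : ℕ → K) (N : ℕ) : Submodule F K :=
  Submodule.span F {f | ∃ c : ℤ, -(N : ℤ) ≤ c ∧ ∃ I : Fin n → Fin T.r, f = T.w 0 ^ c * T.mon X I}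

/-- The Laurent polynomial combinations of the monomials of total degree below `h`. -/
def Low (n : ℕ) (X : ℕ → K) (h : ℕ) : Submodule T.Lau K :=
  Submodule.span T.Lau {f | ∃ I : Fin n → Fin T.r, T.ht I < h ∧ f = T.mon X I}

lemma mul_mem_Low {n h₁ h₂ h : ℕ} {X : ℕ → K} {f g : K} (h₁r : h₁ ≤ T.r)
    (hf : f ∈ Submodule.span T.Lau {f | ∃ b < h₁, f = X 0 ^ b})
    (hg : g ∈ T.Low n (fun i => X (i + 1)) h₂) (hh : h₁ + h₂ ≤ h + 1) :
    f * g ∈ T.Low (n + 1) X h := by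
  have := Submodule.mul_mem_mul hf hg
  rw [Low, Submodule.span_mul_span] at this
  refine Submodule.span_mono ?_ this
  rintro _ ⟨_, ⟨b, hb, rfl⟩, _, ⟨I, hI, rfl⟩, rfl⟩
  refine ⟨Fin.cons ⟨b, by omega⟩ I, ?_, ?_⟩
  · rw [ht_succ, Fin.tail_cons, Fin.cons_zero]; simp only; omega
  · rw [mon_succ, Fin.tail_cons, Fin.cons_zero]

lemma pow_sub_pow_mem {x p : K} (hp : p ∈ T.Lau) (a : ℕ) :
    x ^ a - (x - p) ^ a ∈ Submodule.span T.Lau {f | ∃ b < a, f = x ^ b} := by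
  rw [sub_eq_add_neg x p, _root_.add_pow, Finset.sum_range_succ]
  simp only [tsub_self, pow_zero, mul_one, Nat.choose_self, Nat.cast_one]
  rw [sub_add_cancel_right]
  refine neg_mem (sum_mem fun b hb => ?_)
  have : x ^ b * (-p) ^ (a - b) * (a.choose b : K) =
      (⟨(-p) ^ (a - b) * (a.choose b : K), mul_mem (pow_mem (neg_mem hp) _) (natCast_mem _ _)⟩ :
        T.Lau) • x ^ b := by
    rw [Subalgebra.smul_def]; simp only [smul_eq_mul]; ring
  rw [this]
  exact Submodule.smul_mem _ _ (Submodule.subset_span ⟨b, Finset.mem_range.1 hb, rfl⟩)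

lemma mon_sub_mon_mem {n : ℕ} (X p : ℕ → K) (hp : ∀ i, p i ∈ T.Lau) (I : Fin n → Fin T.r) :
    T.mon X I - T.mon (fun i => X i - p i) I ∈ T.Low n X (T.ht I) := by
  induction n generalizing X p with
  | zero => simp [mon]
  | succ n ih =>
    have h1 := ih (fun i => X (i + 1)) (fun i => p (i + 1)) (fun i => hp _) (Fin.tail I)
    have h2 : T.mon (fun i => X (i + 1) - p (i + 1)) (Fin.tail I) ∈
        T.Low n (fun i => X (i + 1)) (T.ht (Fin.tail I) + 1) := by
      have h3 : T.mon (fun i => X (i + 1)) (Fin.tail I) ∈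
          T.Low n (fun i => X (i + 1)) (T.ht (Fin.tail I) + 1) :=
        Submodule.subset_span ⟨_, Nat.lt_succ_self _, rfl⟩
      have h4 : T.Low n (fun i => X (i + 1)) (T.ht (Fin.tail I)) ≤
          T.Low n (fun i => X (i + 1)) (T.ht (Fin.tail I) + 1) := by
        refine Submodule.span_mono ?_
        rintro _ ⟨J, hJ, rfl⟩
        exact ⟨J, by omega, rfl⟩
      have := sub_mem h3 (h4 h1)
      rwa [sub_sub_cancel] at this
    have hI := (I 0).2
    have h5 := T.mul_mem_Low (h := T.ht I) (h₁ := (I 0 : ℕ) + 1) (by omega)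
      (Submodule.subset_span ⟨(I 0 : ℕ), Nat.lt_succ_self _, rfl⟩) h1 (by rw [ht_succ]; omega)
    have h6 := T.mul_mem_Low (h := T.ht I) (h₁ := (I 0 : ℕ)) (X := X) (by omega)
      (T.pow_sub_pow_mem (hp 0) _) h2 (by rw [ht_succ]; omega)
    convert add_mem h5 h6 using 1
    rw [mon_succ, mon_succ]; ring

open Filter in
lemma Low_bounded {n h : ℕ} {X : ℕ → K} {f : K} (hf : f ∈ T.Low n X h) :
    ∀ᶠ N : ℕ in atTop, f ∈ Submodule.span F {f | ∃ c : ℤ, -(N : ℤ) ≤ c ∧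
      ∃ I : Fin n → Fin T.r, T.ht I < h ∧ f = T.w 0 ^ c * T.mon X I} := by
  induction hf using Submodule.closure_induction with
  | zero => exact .of_forall fun N => zero_mem _
  | add f g _ _ hf hg =>
    filter_upwards [hf, hg] with N h1 h2 using add_mem h1 h2
  | smul_mem l g hg =>
    obtain ⟨I, hI, rfl⟩ := hg
    obtain ⟨l, M, hM⟩ := l
    filter_upwards [eventually_ge_atTop M] with N hN
    have h1 := Submodule.mem_map_of_mem (f := LinearMap.mulRight F (T.w 0 ^ (-(M : ℤ)) * T.mon X I))
      (T.mem_P_iff hM)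
    have h2 : (LinearMap.mulRight F (T.w 0 ^ (-(M : ℤ)) * T.mon X I)) (T.w 0 ^ M * l) =
        l * T.mon X I := by
      have := T.w_ne 0
      simp only [LinearMap.mulRight_apply, zpow_neg, zpow_natCast]
      field_simp
    rw [h2, Submodule.map_span] at h1
    rw [Subalgebra.smul_def, smul_eq_mul]
    refine Submodule.span_mono ?_ h1
    rintro _ ⟨_, ⟨i, rfl⟩, rfl⟩
    refine ⟨i + -(M : ℤ), by omega, I, hI, ?_⟩
    rw [zpow_add₀ (T.w_ne 0)]; simp [mul_assoc]

open Filter in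
/-- If each `X i` has a Laurent polynomial correction `p i` such that the monomials in the
`X i - p i` lie in `S` once multiplied by a positive power of `w`, then modulo `S` the space `Lam`
is spanned by the `w ^ c * X^I` with `-N ≤ c ≤ 0`: the corrections only involve monomials of lower
total degree, so the system is triangular. -/
lemma codim_triangular {n : ℕ} (X p : ℕ → K) (hp : ∀ i, p i ∈ T.Lau) (S : Submodule F K)
    (hS : ∀ (I : Fin n → Fin T.r) (d : ℕ), 1 ≤ d →
      T.w 0 ^ d * T.mon (fun i => X i - p i) I ∈ S) :
    ∀ᶠ N : ℕ in atTop, CodimLE (T.Lam n X N) S ((N + 1) * T.r ^ n) := by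
  have h1 : ∀ᶠ N : ℕ in atTop, ∀ I : Fin n → Fin T.r,
      T.mon X I - T.mon (fun i => X i - p i) I ∈ Submodule.span F {f | ∃ c : ℤ, -(N : ℤ) ≤ c ∧
      ∃ J : Fin n → Fin T.r, T.ht J < T.ht I ∧ f = T.w 0 ^ c * T.mon X J} :=
    eventually_all.2 fun I => T.Low_bounded (T.mon_sub_mon_mem X p hp I)
  filter_upwards [h1] with N hN
  have key : ∀ h, ∀ (I : Fin n → Fin T.r), T.ht I < h → ∀ c : ℤ, -(N : ℤ) ≤ c →
      T.w 0 ^ c * T.mon X I ∈ S ⊔ Submodule.span F (Set.range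
        fun s : Fin (N + 1) × (Fin n → Fin T.r) => T.w 0 ^ (-(s.1 : ℤ)) * T.mon X s.2) := by
    intro h
    induction h with
    | zero => intro I hI; omega
    | succ h ih =>
      intro I hI c hc
      rcases le_or_gt c 0 with h0 | h0
      · refine Submodule.mem_sup_right (Submodule.subset_span ⟨(⟨(-c).toNat, by omega⟩, I), ?_⟩)
        simp only
        congr 2; omega
      · obtain ⟨d, rfl⟩ : ∃ d : ℕ, c = d := ⟨c.toNat, by omega⟩
        have e : T.w 0 ^ (d : ℤ) * T.mon X I = T.w 0 ^ d * T.mon (fun i => X i - p i) I +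
            T.w 0 ^ d * (T.mon X I - T.mon (fun i => X i - p i) I) := by
          rw [zpow_natCast]; ring
        rw [e]
        refine add_mem (Submodule.mem_sup_left (hS I d (by omega))) ?_
        have h2 := Submodule.mem_map_of_mem (f := LinearMap.mulLeft F (T.w 0 ^ d)) (hN I)
        rw [Submodule.map_span] at h2
        refine Submodule.span_le.2 ?_ h2
        rintro _ ⟨_, ⟨c', hc', J, hJ, rfl⟩, rfl⟩
        have := ih J (by omega) (d + c') (by omega)
        rwa [zpow_add₀ (T.w_ne 0), zpow_natCast, mul_assoc] at this
  have h3 := codimLE_of_span (M := T.Lam n X N) (S := S)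
    (fun s : Fin (N + 1) × (Fin n → Fin T.r) => T.w 0 ^ (-(s.1 : ℤ)) * T.mon X s.2) (by
      refine Submodule.span_le.2 ?_
      rintro _ ⟨c, hc, I, rfl⟩
      exact key _ I (Nat.lt_succ_self _) c hc)
  simpa using h3

end GSTower

/-! ### Counting pole conditions above `w₀ = 0` -/

namespace GSTower

variable {F K : Type*} [Field F] [Fintype F] [Field K] [Algebra F K] (T : GSTower F K)

/-- The functions regular at all places of `Z`. -/
def S (Z : Set (ValuationSubring K)) : Submodule F K where
  carrier := {f | ∀ A ∈ Z, f ∈ A}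
  zero_mem' A _ := zero_mem A
  add_mem' hf hg A hA := add_mem (hf A hA) (hg A hA)
  smul_mem' a _ hf A hA := T.smul_mem A a (hf A hA)

/-- The functions whose poles above `w 0 = 0` are bounded by those of some power of `1 / w 0`,
uniformly over all places. -/
def Bd : Subalgebra F K where
  carrier := {f | ∃ N : ℕ, ∀ A ∈ T.Z 0, T.w 0 ^ N * f ∈ A}
  algebraMap_mem' a := ⟨0, fun A _ => by simpa using T.const_mem A a⟩
  add_mem' := by
    rintro f g ⟨N, hN⟩ ⟨M, hM⟩
    refine ⟨N + M, fun A hA => ?_⟩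
    have hw := Z.w_mem hA
    convert add_mem (mul_mem (pow_mem hw M) (hN A hA)) (mul_mem (pow_mem hw N) (hM A hA)) using 1
    ring
  mul_mem' := by
    rintro f g ⟨N, hN⟩ ⟨M, hM⟩
    refine ⟨N + M, fun A hA => ?_⟩
    convert mul_mem (hN A hA) (hM A hA) using 1
    ring

lemma x_mem_Bd {j : ℕ} (h : T.w j ∈ T.Bd) : T.x j ∈ T.Bd := by
  obtain ⟨N, hN⟩ := h
  refine ⟨N, fun A hA => ?_⟩
  have hw : T.w 0 ^ N ∈ A := pow_mem (Z.w_mem hA) N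
  by_cases hj : T.w j ∈ A
  · exact mul_mem hw (T.mem_of_as (T.hx j) hj)
  · rw [← A.valuation_le_one_iff, not_le] at hj
    obtain ⟨h1, h2⟩ := T.val_of_pole (T.hx j) hj
    have h3 := (A.valuation_le_one_iff _).2 (hN A hA)
    rw [← A.valuation_le_one_iff]
    refine le_trans ?_ h3
    rw [map_mul, map_mul, ← h2]
    exact mul_le_mul' le_rfl (le_self_pow h1.le T.r_ne)

lemma tower_mem_Bd (j : ℕ) : T.w j ∈ T.Bd ∧ (T.w j)⁻¹ ∈ T.Bd := by
  induction j with
  | zero =>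
    refine ⟨⟨0, fun A hA => by simpa using Z.w_mem hA⟩, ⟨1, fun A hA => ?_⟩⟩
    rw [pow_one, mul_inv_cancel₀ (T.w_ne 0)]; exact one_mem A
  | succ j ih =>
    have hx := T.x_mem_Bd ih.1
    have hx' : (T.x j)⁻¹ ∈ T.Bd := by
      rw [inv_x_eq]; exact mul_mem (add_mem (one_mem _) (pow_mem hx _)) ih.2
    constructor
    · rw [w_succ_eq, div_eq_mul_inv]
      exact sub_mem hx (mul_mem (pow_mem hx _) ih.2)
    · rw [inv_w_succ_eq, ← inv_pow]
      exact add_mem hx' (pow_mem hx' _)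

/-- On the branch `Br k β`, powers of `x k` can be replaced by polynomials in `w 0`, which removes
one variable. -/
lemma Lam_peel (k n N : ℕ) {β : F} (hβ : β ^ T.r + β = 0) :
    T.Lam (n + 1) (fun i => T.x (k + i)) N ≤
      T.Lam n (fun i => T.x (k + 1 + i)) N ⊔ T.S (T.Br k β) := by
  refine Submodule.span_le.2 ?_
  rintro _ ⟨c, hc, I, rfl⟩
  rw [mon_succ]
  have e0 : (fun i => T.x (k + (i + 1))) = fun i => T.x (k + 1 + i) := by
    ext i; congr 1; omega
  rw [e0]
  set m := T.mon (fun i => T.x (k + 1 + i)) (Fin.tail I) with hm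
  have hmB : m ∈ T.Bd := prod_mem fun i _ => pow_mem (T.x_mem_Bd (T.tower_mem_Bd _).1) _
  obtain ⟨M, hM⟩ := hmB
  obtain ⟨p, hp, hA⟩ := pow_mem (x_mem_App_Br k hβ) (I 0 : ℕ) (N + M)
  simp only [add_zero]
  have e : T.w 0 ^ c * (T.x k ^ (I 0 : ℕ) * m) =
      p * (T.w 0 ^ c * m) + T.w 0 ^ c * m * (T.x k ^ (I 0 : ℕ) - p) := by ring
  rw [e]
  refine add_mem (Submodule.mem_sup_left ?_) (Submodule.mem_sup_right ?_)
  · have h1 := Submodule.mem_map_of_mem (f := LinearMap.mulRight F (T.w 0 ^ c * m))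
      (T.mem_P_iff hp)
    rw [Submodule.map_span] at h1
    refine Submodule.span_mono ?_ h1
    rintro _ ⟨_, ⟨i, rfl⟩, rfl⟩
    refine ⟨i + c, by omega, Fin.tail I, ?_⟩
    rw [zpow_add₀ (T.w_ne 0)]; simp [mul_assoc, hm]
  · intro A hAB
    have h1 := hA A hAB (Z.zero hAB.1)
    have h2 := hM A (Z.zero hAB.1)
    obtain ⟨d, hd⟩ : ∃ d : ℕ, c = d - N := ⟨(c + N).toNat, by omega⟩
    have h3 : T.w 0 ^ d ∈ A := pow_mem (Z.w_mem hAB.1) d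
    convert mul_mem (mul_mem h3 h2) h1 using 1
    have := T.w_ne 0
    rw [hd, zpow_sub₀ this, zpow_natCast, zpow_natCast]
    field_simp
    ring

open Filter

lemma prod_range_of_fin {n : ℕ} (Y : ℕ → K) (I : Fin n → Fin T.r) :
    ∃ J : ℕ → ℕ, (∀ i, J i < T.r) ∧ T.mon Y I = ∏ i ∈ Finset.range n, Y i ^ J i := by
  refine ⟨fun i => if h : i < n then I ⟨i, h⟩ else 0, fun i => ?_, ?_⟩
  · dsimp only
    split_ifs with h
    · exact (I ⟨i, h⟩).2
    · exact T.r_pos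
  · rw [mon, Finset.prod_range]
    simp

/-- The conditions of regularity on a branch with `β ≠ 0`. The poles of the first `k` of the
variables `x (k + 1 + i)` are corrected by Laurent polynomials through the reflection, and the
remaining ones are controlled by total ramification. -/
lemma codim_branch (k n : ℕ) {β : F} (h0 : β ≠ 0) (hβ : β ^ T.r + β = 0) :
    ∀ᶠ N : ℕ in atTop,
      CodimLE (T.Lam n (fun i => T.x (k + 1 + i)) N) (T.S (T.Br k β)) ((N + 1) * T.r ^ n) := by
  have hp : ∀ i, ∃ p ∈ T.Lau, (i < k → ∀ A ∈ T.Br k β, T.x (k + 1 + i) - p ∈ A) ∧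
      (k ≤ i → p = 0) := by
    intro i
    by_cases hi : i < k
    · obtain ⟨N, p, hp, h1⟩ := exists_principal_part (T := T) k (k - 1 - i) (by omega) (-β ^ 2)
      refine ⟨p / T.w 0 ^ N, ⟨N, ?_⟩, fun _ A hA => ?_, fun h => by omega⟩
      · rwa [mul_div_cancel₀ _ (pow_ne_zero _ (T.w_ne 0))]
      · have h2 := reflect h0 hβ hA i (k - 1 - i + 1) (by omega)
        have h3 := add_mem (reflect_x hβ h2) (h1 A hA.1)
        convert h3 using 1
        rw [map_neg, map_pow]; ring
    · exact ⟨0, zero_mem _, fun h => absurd h hi, fun _ => rfl⟩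
  choose p hpL hp1 hp2 using hp
  refine T.codim_triangular _ p hpL _ fun I d hd A hA => ?_
  obtain ⟨J, hJ, e⟩ := T.prod_range_of_fin (fun i => T.x (k + 1 + i) - p i) I
  rw [e]
  have hw : T.w 0 ∈ A := Z.w_mem hA.1
  have hsmall : ∀ s ≤ k, ∏ i ∈ Finset.range s, (T.x (k + 1 + i) - p i) ^ J i ∈ A := fun s hs =>
    prod_mem fun i hi => pow_mem (hp1 i (by have := Finset.mem_range.1 hi; omega) A hA) _
  rcases le_total n k with hnk | hnk
  · exact mul_mem (pow_mem hw d) (hsmall n hnk)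
  · obtain ⟨s, rfl⟩ := Nat.exists_eq_add_of_le hnk
    obtain ⟨d, rfl⟩ := Nat.exists_eq_add_of_le hd
    rw [Finset.prod_range_add, pow_add, pow_one]
    have hv := val_reflect h0 hβ hA
    have h1 : 1 < A.valuation (T.w (2 * k + 1)) := by
      rw [hv]; exact (one_lt_inv₀ (val_pos A (T.w_ne 0))).2 hA.1.1
    -- from level `2 * k + 1` on, a single factor `w 0` absorbs the whole product
    obtain ⟨h2, h3⟩ := ram_prod h1 (fun i => J (k + i)) (fun i => hJ _) s
    have h4 : T.w 0 * ∏ i ∈ Finset.range s, (T.x (k + 1 + (k + i)) - p (k + i)) ^ J (k + i) ∈ A := by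
      rw [← A.valuation_le_one_iff, map_mul, map_prod]
      rw [hv, inv_inv] at h3
      refine le_trans (le_of_eq ?_) (h3.trans (inv_le_one_of_one_le₀ h2.le))
      congr 1
      refine Finset.prod_congr rfl fun i _ => ?_
      rw [hp2 (k + i) (by omega), sub_zero, map_pow, show k + 1 + (k + i) = 2 * k + 1 + i by omega]
    convert mul_mem (pow_mem hw d) (mul_mem (hsmall k le_rfl) h4) using 1
    ring

lemma Br_zero (k : ℕ) : T.Br k 0 = T.Z (k + 1) := by
  ext A
  constructor
  · rintro ⟨h1, h2⟩
    refine ⟨h1.1, fun i hi => ?_⟩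
    rcases Nat.lt_succ_iff_lt_or_eq.1 hi with h | rfl
    · exact h1.2 i h
    · simpa using h2
  · intro h
    exact ⟨⟨h.1, fun i hi => h.2 i (by omega)⟩, by simpa using h.2 k (by omega)⟩

lemma card_B : Nat.card {β : F // β ^ T.r + β = 0} ≤ T.r := by
  classical
  let g : Polynomial F := Polynomial.X ^ T.r + Polynomial.X
  have hdeg : (Polynomial.X : Polynomial F).degree < (T.r : ℕ) := by
    rw [Polynomial.degree_X]; exact_mod_cast (by have := T.three_le; omega : 1 < T.r)
  have hm : g.Monic := Polynomial.monic_X_pow_add hdeg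
  have hd : g.natDegree = T.r := by
    rw [Polynomial.natDegree_eq_of_degree_eq_some]
    rw [Polynomial.degree_add_eq_left_of_degree_lt, Polynomial.degree_X_pow]
    rwa [Polynomial.degree_X_pow]
  rw [Nat.card_eq_fintype_card, Fintype.card_subtype]
  refine le_trans (Finset.card_le_card ?_)
    ((Multiset.toFinset_card_le g.roots).trans ((Polynomial.card_roots' g).trans hd.le))
  intro β hβ
  rw [Multiset.mem_toFinset, Polynomial.mem_roots hm.ne_zero]
  simpa [g] using hβ

lemma S_Z_eq (k : ℕ) :
    T.S (T.Z k) = ⨅ β : {β : F // β ^ T.r + β = 0}, T.S (T.Br k β) := by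
  apply le_antisymm
  · exact le_iInf fun β f hf A hA => hf A hA.1
  · intro f hf A hA
    rw [Submodule.mem_iInf] at hf
    rcases Z.cover hA with h | ⟨β, -, hβ, h⟩
    · exact hf ⟨0, by simp [T.r_ne]⟩ A (by simpa [Br_zero] using h)
    · exact hf ⟨β, hβ⟩ A h

/-- Regularity on `Z k` costs at most `(N + 1) * r ^ n` linear conditions. At most `r` branches
occur at each step, and restricting to one of them saves one variable, that is a factor `r`. -/
lemma codim_Z (n : ℕ) : ∀ k : ℕ, ∀ᶠ N : ℕ in atTop,
    CodimLE (T.Lam n (fun i => T.x (k + i)) N) (T.S (T.Z k)) ((N + 1) * T.r ^ n) := by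
  classical
  induction n with
  | zero =>
    intro k
    refine T.codim_triangular _ (fun _ => 0) (fun _ => zero_mem _) _ fun I d hd A hA => ?_
    simpa [mon] using pow_mem (Z.w_mem hA) d
  | succ n ih =>
    intro k
    have h : ∀ β : {β : F // β ^ T.r + β = 0}, ∀ᶠ N : ℕ in atTop,
        CodimLE (T.Lam (n + 1) (fun i => T.x (k + i)) N) (T.S (T.Br k β))
          ((N + 1) * T.r ^ n) := by
      rintro ⟨β, hβ⟩
      have h1 : ∀ᶠ N : ℕ in atTop, CodimLE (T.Lam n (fun i => T.x (k + 1 + i)) N)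
          (T.S (T.Br k β)) ((N + 1) * T.r ^ n) := by
        by_cases h0 : β = 0
        · rw [h0, Br_zero]; exact ih (k + 1)
        · exact T.codim_branch k n h0 hβ
      filter_upwards [h1] with N hN using hN.mono (T.Lam_peel k n N hβ) le_rfl
    filter_upwards [eventually_all.2 h] with N hN
    rw [S_Z_eq]
    refine (CodimLE.iInf hN).mono le_sup_left ?_
    have := T.card_B
    rw [Nat.card_eq_fintype_card] at this
    calc _ ≤ T.r * ((N + 1) * T.r ^ n) := Nat.mul_le_mul_right _ this
      _ = _ := by ring

end GSTower

/-! ### The place at infinity and the functions `E m d` -/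

namespace GSTower

variable {F K : Type*} [Field F] [Fintype F] [Field K] [Algebra F K] (T : GSTower F K)

/-- A chosen place at which `w 0`, and hence every `w m`, has a pole. -/
noncomputable def Ainf : ValuationSubring K := T.exists_pole.choose

lemma one_lt_inf (m : ℕ) : 1 < T.Ainf.valuation (T.w m) := by
  induction m with
  | zero =>
    rw [← not_le, T.Ainf.valuation_le_one_iff]
    exact T.exists_pole.choose_spec
  | succ m ih => exact (ram ih).2.2

/-- The valuation of `w m` at infinity, which serves as the unit in which pole orders of functions
of level `m` are measured. -/
noncomputable def γ (m : ℕ) : T.Ainf.ValueGroup := T.Ainf.valuation (T.w m)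

lemma one_lt_γ (m : ℕ) : 1 < T.γ m := T.one_lt_inf m

lemma val_x_inf (m : ℕ) : T.Ainf.valuation (T.x m) = T.γ (m + 1) := (ram (T.one_lt_inf m)).2.1.symm

lemma γ_succ_pow (m : ℕ) : T.γ (m + 1) ^ T.r = T.γ m := by
  rw [← val_x_inf]; exact (ram (T.one_lt_inf m)).1

/-- A function of level `m` with a pole of order exactly `d` at infinity (a zero if `d < 0`):
`w 0 ^ c` times the monomial in `x 0, …, x (m - 1)` whose exponents are the base-`r` digits of `d`. -/
def E : ℕ → ℤ → K
  | 0, d => T.w 0 ^ d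
  | m + 1, d => E m (d / T.r) * T.x m ^ (d % T.r).toNat

lemma val_E (m : ℕ) (d : ℤ) : T.Ainf.valuation (T.E m d) = T.γ m ^ d := by
  induction m generalizing d with
  | zero => rw [E, map_zpow₀]; rfl
  | succ m ih =>
    have hr : (T.r : ℤ) ≠ 0 := by exact_mod_cast T.r_ne
    have h0 := (zero_lt_one.trans (T.one_lt_γ (m + 1))).ne'
    rw [E, map_mul, map_pow, ih, val_x_inf, ← γ_succ_pow, ← zpow_natCast, ← zpow_natCast,
      ← zpow_mul, ← zpow_add₀ h0, Int.toNat_of_nonneg (Int.emod_nonneg _ hr), Int.mul_ediv_add_emod]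

lemma E_add (m : ℕ) (d : ℤ) : T.E m (d + T.r ^ m) = T.E m d * T.w 0 := by
  have hr : (T.r : ℤ) ≠ 0 := by exact_mod_cast T.r_ne
  induction m generalizing d with
  | zero => simp [E, zpow_add_one₀ (T.w_ne 0)]
  | succ m ih =>
    rw [E, E, pow_succ, Int.add_mul_ediv_right _ _ hr, Int.add_mul_emod_self_right, ih]; ring

lemma E_add_mul (m : ℕ) (d : ℤ) (k : ℕ) : T.E m (d + k * T.r ^ m) = T.E m d * T.w 0 ^ k := by
  induction k with
  | zero => simp
  | succ k ih =>
    rw [pow_succ, ← mul_assoc, ← ih, ← E_add]; congr 1; push_cast; ring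

lemma E_succ_mul_add (m : ℕ) (d : ℤ) {a : ℕ} (ha : a < T.r) :
    T.E (m + 1) (d * T.r + a) = T.E m d * T.x m ^ a := by
  have hr : (T.r : ℤ) ≠ 0 := by exact_mod_cast T.r_ne
  have h1 : ((a : ℤ)) / T.r = 0 := Int.ediv_eq_zero_of_lt (by omega) (by exact_mod_cast ha)
  have h2 : ((a : ℤ)) % T.r = a := Int.emod_eq_of_lt (by omega) (by exact_mod_cast ha)
  rw [E, add_comm, Int.add_mul_ediv_right _ _ hr, Int.add_mul_emod_self_right, h1, h2, zero_add,
    Int.toNat_natCast]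

lemma E_eq_mon (m : ℕ) (d : ℤ) :
    ∃ I : Fin m → Fin T.r, T.E m d = T.w 0 ^ (d / T.r ^ m) * T.mon T.x I := by
  have hr : (0 : ℤ) < T.r := by exact_mod_cast T.r_pos
  induction m generalizing d with
  | zero => exact ⟨Fin.elim0, by simp [E, mon]⟩
  | succ m ih =>
    obtain ⟨I, hI⟩ := ih (d / T.r)
    have h1 := Int.emod_nonneg d hr.ne'
    have h2 := Int.emod_lt_of_pos d hr
    refine ⟨Fin.snoc I ⟨(d % T.r).toNat, by omega⟩, ?_⟩
    rw [E, hI, mon, mon, Fin.prod_univ_castSucc]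
    simp only [Fin.snoc_castSucc, Fin.snoc_last, Fin.val_castSucc, Fin.val_last]
    rw [Int.ediv_ediv_of_nonneg hr.le, ← pow_succ', mul_assoc]

lemma E_mem_Lam (m N : ℕ) {d : ℤ} (hd : -(N : ℤ) * T.r ^ m ≤ d) : T.E m d ∈ T.Lam m T.x N := by
  obtain ⟨I, hI⟩ := T.E_eq_mon m d
  refine Submodule.subset_span ⟨_, ?_, I, hI⟩
  have hr : (0 : ℤ) < T.r ^ m := by exact_mod_cast pow_pos T.r_pos m
  exact (Int.le_ediv_iff_mul_le hr).2 hd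

/-- The span of the functions `E m d`, as a vector space. -/
def USub (m : ℕ) : Submodule F K := Submodule.span F (Set.range (T.E m))

lemma E_mem (m : ℕ) (d : ℤ) : T.E m d ∈ T.USub m := Submodule.subset_span ⟨d, rfl⟩

lemma USub_le_succ (m : ℕ) {f : K} (hf : f ∈ T.USub m) {a : ℕ} (ha : a < T.r) :
    f * T.x m ^ a ∈ T.USub (m + 1) := by
  have := Submodule.mem_map_of_mem (f := LinearMap.mulRight F (T.x m ^ a)) hf
  rw [USub, Submodule.map_span] at this
  refine Submodule.span_mono ?_ this
  rintro _ ⟨_, ⟨d, rfl⟩, rfl⟩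
  exact ⟨d * T.r + a, T.E_succ_mul_add m d ha⟩

lemma USub_induction {m : ℕ} {M : Submodule F K} {g : K} (h : ∀ d, T.E m d * g ∈ M) {f : K}
    (hf : f ∈ T.USub m) : f * g ∈ M := by
  have : T.USub m ≤ M.comap (LinearMap.mulRight F g) := by
    refine Submodule.span_le.2 ?_
    rintro _ ⟨d, rfl⟩
    exact h d
  exact this hf

/-- Closure under products and inverses of the `w j` comes from the relations
`x ^ r = w - x`, `w' = x - x² / w`, `1 / x = (1 + x ^ (r - 1)) / w` and `1 / w' = 1 / x + 1 / x ^ r`. -/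
lemma USub_mul (m : ℕ) : (∀ f ∈ T.USub m, ∀ g ∈ T.USub m, f * g ∈ T.USub m) ∧
    (1 : K) ∈ T.USub m ∧ T.w m ∈ T.USub m ∧ (T.w m)⁻¹ ∈ T.USub m := by
  induction m with
  | zero =>
    refine ⟨fun f hf g hg => T.USub_induction (fun d => ?_) hf, ?_, ?_, ?_⟩
    · rw [mul_comm]
      refine T.USub_induction (fun e => ?_) hg
      have := T.E_mem 0 (e + d)
      rwa [E, zpow_add₀ (T.w_ne 0)] at this
    · simpa [E] using T.E_mem 0 0
    · simpa [E] using T.E_mem 0 1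
    · simpa [E] using T.E_mem 0 (-1)
  | succ m ih =>
    obtain ⟨ihm, ih1, ihw, ihi⟩ := ih
    have hr := T.three_le
    have hmul0 : ∀ f ∈ T.USub m, ∀ g ∈ T.USub (m + 1), f * g ∈ T.USub (m + 1) := by
      intro f hf g hg
      rw [mul_comm]
      refine T.USub_induction (fun d => ?_) hg
      rw [E, mul_right_comm]
      refine T.USub_le_succ m (ihm _ (T.E_mem _ _) _ hf) ?_
      have h2 := Int.emod_lt_of_pos d (b := T.r) (by exact_mod_cast T.r_pos)
      omega
    have hmulx : ∀ g ∈ T.USub (m + 1), g * T.x m ∈ T.USub (m + 1) := by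
      intro g hg
      refine T.USub_induction (fun d => ?_) hg
      have h2 := Int.emod_lt_of_pos d (b := T.r) (by exact_mod_cast T.r_pos)
      rw [E, mul_assoc, ← pow_succ]
      by_cases h : (d % T.r).toNat + 1 < T.r
      · exact T.USub_le_succ m (T.E_mem _ _) h
      · have h3 : (d % T.r).toNat + 1 = T.r := by omega
        have h4 : T.E m (d / T.r) * T.x m ^ T.r =
            T.E m (d / T.r) * T.w m * T.x m ^ 0 - T.E m (d / T.r) * T.x m ^ 1 := by
          rw [← T.hx]; ring
        rw [h3, h4]
        exact sub_mem (T.USub_le_succ m (ihm _ (T.E_mem _ _) _ ihw) (by omega))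
          (T.USub_le_succ m (T.E_mem _ _) (by omega))
    have hmulxp : ∀ a : ℕ, ∀ g ∈ T.USub (m + 1), g * T.x m ^ a ∈ T.USub (m + 1) := by
      intro a
      induction a with
      | zero => intro g hg; simpa using hg
      | succ a iha => intro g hg; rw [pow_succ, ← mul_assoc]; exact hmulx _ (iha g hg)
    have hmul : ∀ f ∈ T.USub (m + 1), ∀ g ∈ T.USub (m + 1), f * g ∈ T.USub (m + 1) := by
      intro f hf g hg
      refine T.USub_induction (fun d => ?_) hf
      rw [E, mul_assoc, mul_comm (T.x m ^ _)]
      exact hmul0 _ (T.E_mem _ _) _ (hmulxp _ _ hg)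
    have hone : (1 : K) ∈ T.USub (m + 1) := by
      simpa using T.USub_le_succ m ih1 T.r_pos
    have hpow : ∀ f ∈ T.USub (m + 1), ∀ a : ℕ, f ^ a ∈ T.USub (m + 1) := by
      intro f hf a
      induction a with
      | zero => simpa using hone
      | succ a iha => rw [pow_succ]; exact hmul _ iha _ hf
    have hx : T.x m ∈ T.USub (m + 1) := by simpa using hmulx _ hone
    have hi : (T.w m)⁻¹ ∈ T.USub (m + 1) := by simpa using T.USub_le_succ m ihi T.r_pos
    have hxi : (T.x m)⁻¹ ∈ T.USub (m + 1) := by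
      rw [inv_x_eq]; exact hmul _ (add_mem hone (hpow _ hx _)) _ hi
    refine ⟨hmul, hone, ?_, ?_⟩
    · rw [w_succ_eq, div_eq_mul_inv]
      exact sub_mem hx (hmul _ (hpow _ hx _) _ hi)
    · rw [inv_w_succ_eq, ← inv_pow]
      exact add_mem hxi (hpow _ hxi _)

/-- The ring `F[w_0, w_0⁻¹, x_0, …, x_{m-1}]` of functions of level `m` without poles outside
`w_0 = 0` and `w_0 = ∞`, with basis the `E m d`. -/
def U (m : ℕ) : Subalgebra F K :=
  (T.USub m).toSubalgebra (T.USub_mul m).2.1 fun f g hf hg => (T.USub_mul m).1 f hf g hg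

lemma mem_U {m : ℕ} {f : K} : f ∈ T.U m ↔ f ∈ T.USub m := Iff.rfl

lemma U_le_succ (m : ℕ) : T.U m ≤ T.U (m + 1) := fun f hf => by
  rw [mem_U]
  simpa using T.USub_le_succ m hf T.r_pos

lemma U_mono {m n : ℕ} (h : m ≤ n) : T.U m ≤ T.U n := monotone_nat_of_le_succ T.U_le_succ h

lemma w_mem_U {j m : ℕ} (h : j ≤ m) : T.w j ∈ T.U m := T.U_mono h (T.USub_mul j).2.2.1

lemma inv_w_mem_U {j m : ℕ} (h : j ≤ m) : (T.w j)⁻¹ ∈ T.U m := T.U_mono h (T.USub_mul j).2.2.2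

lemma x_mem_U {j m : ℕ} (h : j < m) : T.x j ∈ T.U m := by
  refine T.U_mono h ?_
  have := T.USub_le_succ j (T.USub_mul j).2.1 (a := 1) (by have := T.three_le; omega)
  rw [mem_U]
  simpa using this

end GSTower

/-! ### Rational points -/

/-- A finite-dimensional algebra with `a^q = a` is split. -/
lemma exists_equiv_pi_of_pow_card (F Q : Type*) [Field F] [Fintype F] [CommRing Q] [Algebra F Q]
    [Module.Finite F Q] (h : ∀ a : Q, a ^ Fintype.card F = a) :
    ∃ n : ℕ, n = Module.finrank F Q ∧ Nonempty (Q ≃ₐ[F] (Fin n → F)) := by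
  have : IsArtinianRing Q := IsArtinianRing.of_finite F Q
  have : IsReduced Q := by
    constructor
    rintro a ⟨k, hk⟩
    have h1 : ∀ j : ℕ, a ^ (Fintype.card F ^ j) = a := by
      intro j
      induction j with
      | zero => simp
      | succ j ih => rw [pow_succ, pow_mul, ih, h]
    have h2 : k ≤ Fintype.card F ^ k := (Nat.lt_pow_self Fintype.one_lt_card).le
    rw [← h1 k, ← Nat.sub_add_cancel h2, pow_add, hk, mul_zero]
  have e1 : Q ≃ₐ[F] (∀ I : MaximalSpectrum Q, Q ⧸ I.asIdeal) :=
    (IsArtinianRing.equivPi Q).restrictScalars F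
  have hb : ∀ I : MaximalSpectrum Q, Function.Bijective (algebraMap F (Q ⧸ I.asIdeal)) := by
    intro I
    have := I.isMaximal
    have : IsDomain (Q ⧸ I.asIdeal) := Ideal.Quotient.isDomain _
    refine ⟨(algebraMap F (Q ⧸ I.asIdeal)).injective, fun a => ?_⟩
    have h1 : a ^ Fintype.card F - a = 0 := by
      obtain ⟨b, rfl⟩ := Ideal.Quotient.mk_surjective a
      rw [← map_pow, h, sub_self]
    have h2 := congrArg (Polynomial.aeval a) (GSTower.X_pow_card_sub_X_eq_prod F)
    simp only [map_sub, map_pow, Polynomial.aeval_X, map_prod, Polynomial.aeval_C] at h2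
    rw [h1] at h2
    obtain ⟨c, -, hc⟩ := Finset.prod_eq_zero_iff.1 h2.symm
    exact ⟨c, (sub_eq_zero.1 hc).symm⟩
  have e2 : (∀ I : MaximalSpectrum Q, Q ⧸ I.asIdeal) ≃ₐ[F] (MaximalSpectrum Q → F) :=
    AlgEquiv.piCongrRight fun I => (AlgEquiv.ofBijective (Algebra.ofId F _) (hb I)).symm
  have : Fintype (MaximalSpectrum Q) := Fintype.ofFinite _
  have e3 : (MaximalSpectrum Q → F) ≃ₐ[F] (Fin (Fintype.card (MaximalSpectrum Q)) → F) :=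
    AlgEquiv.piCongrLeft F (fun _ => F) (Fintype.equivFin (MaximalSpectrum Q))
  have e := (e1.trans e2).trans e3
  refine ⟨_, ?_, ⟨e⟩⟩
  rw [e.toLinearEquiv.finrank_eq]; simp

namespace GSTower

variable {F K : Type*} [Field F] [Fintype F] [Field K] [Algebra F K] (T : GSTower F K)

/-- The function `w_0 ^ (r - 1) - 1`. Its zeros are the rational points at which codewords are
evaluated. -/
def z : K := T.w 0 ^ (T.r - 1) - 1

lemma z_mem_U (m : ℕ) : T.z ∈ T.U m := sub_mem (pow_mem (T.w_mem_U (Nat.zero_le _)) _) (one_mem _)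

/-- The ring of functions on the zero scheme of `z` at level `m`. -/
abbrev Q (m : ℕ) := T.U m ⧸ Ideal.span {(⟨T.z, T.z_mem_U m⟩ : T.U m)}

/-- Restriction of functions to the zeros of `z`. -/
def π (m : ℕ) : T.U m →ₐ[F] T.Q m := Ideal.Quotient.mkₐ F _

lemma π_eq_zero {m : ℕ} {f : T.U m} : T.π m f = 0 ↔ ∃ h ∈ T.U m, (f : K) = T.z * h := by
  rw [π, Ideal.Quotient.mkₐ_eq_mk, Ideal.Quotient.eq_zero_iff_mem, Ideal.mem_span_singleton]
  constructor
  · rintro ⟨g, hg⟩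
    exact ⟨g, g.2, by rw [hg]; rfl⟩
  · rintro ⟨h, hh, e⟩
    exact ⟨⟨h, hh⟩, Subtype.ext e⟩

lemma π_surj (m : ℕ) : Function.Surjective (T.π m) := Ideal.Quotient.mk_surjective

lemma Q_add_pow (m : ℕ) (a b : T.Q m) : (a + b) ^ T.r = a ^ T.r + b ^ T.r := by
  obtain ⟨a, rfl⟩ := T.π_surj m a
  obtain ⟨b, rfl⟩ := T.π_surj m b
  rw [← map_add, ← map_pow, ← map_pow, ← map_pow, ← map_add]
  congr 1
  exact Subtype.ext (T.add_pow a b)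

lemma π_w_pow (m : ℕ) : T.π m ⟨T.w 0, T.w_mem_U (Nat.zero_le _)⟩ ^ (T.r - 1) = 1 := by
  rw [← map_pow, ← sub_eq_zero, ← map_one (T.π m), ← map_sub, π_eq_zero]
  exact ⟨1, one_mem _, by simp [z]⟩

/-- On the zeros of `z` every `w j` takes values in the subfield with `r` elements: if `w_j ^ r = w_j`,
then `x_j ^ (r²) = x_j`, so `x_j ^ (r + 1)`, and with it `w_{j+1}`, is fixed by the `r`-th power. -/
lemma π_tower (m : ℕ) : ∀ j, ∀ hj : j ≤ m,
    T.π m ⟨T.w j, T.w_mem_U hj⟩ ^ T.r = T.π m ⟨T.w j, T.w_mem_U hj⟩ := by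
  intro j
  induction j with
  | zero =>
    intro hj
    obtain ⟨s, hs⟩ : ∃ s, T.r = s + 1 := ⟨T.r - 1, by have := T.r_pos; omega⟩
    have := T.π_w_pow m
    rw [hs] at this ⊢
    rw [pow_succ, Nat.add_sub_cancel] at *
    rw [this, one_mul]
  | succ j ih =>
    intro hj
    have ih := ih (by omega)
    set W := T.π m ⟨T.w j, T.w_mem_U (by omega)⟩ with hW
    set W' := T.π m ⟨T.w (j + 1), T.w_mem_U hj⟩ with hW'
    set X := T.π m ⟨T.x j, T.x_mem_U (by omega)⟩ with hX
    have h1 : X ^ T.r + X = W := by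
      rw [hX, hW, ← map_pow, ← map_add]; congr 1; exact Subtype.ext (T.hx j)
    have h2 : W' * W = X ^ (T.r + 1) := by
      rw [hX, hW, hW', ← map_pow, ← map_mul]; congr 1; exact Subtype.ext (T.hw j)
    have hu : W * T.π m ⟨(T.w j)⁻¹, T.inv_w_mem_U (by omega)⟩ = 1 := by
      rw [hW, ← map_mul, ← map_one (T.π m)]; congr 1
      exact Subtype.ext (mul_inv_cancel₀ (T.w_ne j))
    have h3 : (X ^ T.r) ^ T.r = X := by
      have := T.Q_add_pow m (X ^ T.r) X
      rw [h1, ih, ← h1, add_comm (X ^ T.r) X] at this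
      exact (add_right_cancel this).symm
    have h4 : W' ^ T.r * W = W' * W := by
      calc W' ^ T.r * W = (W' * W) ^ T.r := by rw [mul_pow, ih]
        _ = (X ^ T.r) ^ T.r * X ^ T.r := by rw [h2, pow_succ, mul_pow]
        _ = W' * W := by rw [h3, h2, pow_succ']
    calc W' ^ T.r = W' ^ T.r * W * T.π m ⟨(T.w j)⁻¹, T.inv_w_mem_U (by omega)⟩ := by
          rw [mul_assoc, hu, mul_one]
      _ = W' := by rw [h4, mul_assoc, hu, mul_one]

/-- The elements `a` with `a ^ (r²) = a`. -/
def Fix (m : ℕ) : Subalgebra F (T.Q m) where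
  carrier := {a | (a ^ T.r) ^ T.r = a}
  algebraMap_mem' a := by
    simp only [Set.mem_ofPred_eq, ← pow_mul, ← map_pow, T.pow_card]
  add_mem' {a b} ha hb := by
    simp only [Set.mem_ofPred_eq] at *
    rw [T.Q_add_pow, T.Q_add_pow, ha, hb]
  mul_mem' {a b} ha hb := by
    simp only [Set.mem_ofPred_eq] at *
    rw [mul_pow, mul_pow, ha, hb]

lemma x_fix (m : ℕ) {j : ℕ} (hj : j < m) : T.π m ⟨T.x j, T.x_mem_U hj⟩ ∈ T.Fix m := by
  have ih := T.π_tower m j hj.le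
  set W := T.π m ⟨T.w j, T.w_mem_U hj.le⟩ with hW
  set X := T.π m ⟨T.x j, T.x_mem_U hj⟩ with hX
  have h1 : X ^ T.r + X = W := by
    rw [hX, hW, ← map_pow, ← map_add]; congr 1; exact Subtype.ext (T.hx j)
  have := T.Q_add_pow m (X ^ T.r) X
  rw [h1, ih, ← h1, add_comm (X ^ T.r) X] at this
  exact (add_right_cancel this).symm

lemma fix_E (m : ℕ) : ∀ j ≤ m, ∀ d, ∃ h : T.E j d ∈ T.U m, T.π m ⟨T.E j d, h⟩ ∈ T.Fix m := by
  intro j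
  induction j with
  | zero =>
    intro _ d
    have hm : T.E 0 d ∈ T.U m := T.U_mono (Nat.zero_le m) (T.E_mem 0 d)
    refine ⟨hm, ?_⟩
    -- `w ^ d` agrees with a nonnegative power of `w` modulo `z`
    obtain ⟨k, e, hk⟩ : ∃ k e : ℕ, d + ((k * (T.r - 1) : ℕ) : ℤ) = e := by
      have h3 := T.three_le
      refine ⟨d.natAbs, (d + ((d.natAbs * (T.r - 1) : ℕ) : ℤ)).toNat, ?_⟩
      have : d.natAbs * 1 ≤ d.natAbs * (T.r - 1) := Nat.mul_le_mul_left _ (by omega)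
      omega
    have h1 : T.π m ⟨T.E 0 d, hm⟩ = T.π m ⟨T.w 0, T.w_mem_U (Nat.zero_le _)⟩ ^ e := by
      calc T.π m ⟨T.E 0 d, hm⟩ = T.π m ⟨T.E 0 d, hm⟩ *
            (T.π m ⟨T.w 0, T.w_mem_U (Nat.zero_le _)⟩ ^ (T.r - 1)) ^ k := by
            rw [T.π_w_pow, one_pow, mul_one]
        _ = _ := by
          rw [← pow_mul, ← map_pow, ← map_pow, ← map_mul]
          congr 1
          refine Subtype.ext ?_
          simp only [E, MulMemClass.mk_mul_mk, SubmonoidClass.mk_pow]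
          rw [← zpow_natCast, ← zpow_natCast (T.w 0) e, ← zpow_add₀ (T.w_ne 0), ← hk,
            mul_comm (T.r - 1)]
    rw [h1]
    refine pow_mem ?_ _
    have := T.π_tower m 0 (Nat.zero_le _)
    change (_ ^ T.r) ^ T.r = _
    rw [this, this]
  | succ j ih =>
    intro hj d
    obtain ⟨h1, h2⟩ := ih (by omega) (d / T.r)
    refine ⟨mul_mem h1 (pow_mem (T.x_mem_U (by omega)) _), ?_⟩
    have := mul_mem h2 (pow_mem (T.x_fix m (j := j) (by omega)) (d % T.r).toNat)
    rwa [← map_pow, ← map_mul] at this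

lemma Q_pow_card (m : ℕ) (a : T.Q m) : a ^ Fintype.card F = a := by
  rw [T.card_eq, sq, pow_mul]
  obtain ⟨⟨f, hf⟩, rfl⟩ := T.π_surj m a
  change T.π m ⟨f, hf⟩ ∈ T.Fix m
  induction hf using Submodule.span_induction with
  | mem f h => obtain ⟨d, rfl⟩ := h; exact (T.fix_E m m le_rfl d).2
  | zero => exact zero_mem (T.Fix m)
  | add f g hf hg h1 h2 => exact add_mem h1 h2
  | smul a f hf h => exact (T.Fix m).smul_mem h a

/-- The degree of `z` at level `m`, that is the order of its pole at infinity. -/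
def N (m : ℕ) : ℕ := (T.r - 1) * T.r ^ m

lemma N_pos (m : ℕ) : 0 < T.N m :=
  Nat.mul_pos (by have := T.three_le; omega) (pow_pos T.r_pos m)

lemma Q_span (m : ℕ) : Submodule.span F (Set.range fun d : Fin (T.N m) =>
    T.π m ⟨T.E m (d : ℕ), T.E_mem m _⟩) = ⊤ := by
  have hper : ∀ d : ℤ, T.π m ⟨T.E m (d + T.N m), T.E_mem m _⟩ = T.π m ⟨T.E m d, T.E_mem m _⟩ := by
    intro d
    have := T.E_add_mul m d (T.r - 1)
    rw [← sub_eq_zero, ← map_sub, π_eq_zero]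
    refine ⟨T.E m d, T.E_mem m d, ?_⟩
    change T.E m (d + T.N m) - T.E m d = _
    have e : ((T.N m : ℕ) : ℤ) = ((T.r - 1 : ℕ) : ℤ) * (T.r : ℤ) ^ m := by rw [N]; push_cast; ring
    rw [e, this, z]; ring
  have hperk : ∀ (k : ℕ) (d : ℤ), T.π m ⟨T.E m (d + k * T.N m), T.E_mem m _⟩ =
      T.π m ⟨T.E m d, T.E_mem m _⟩ := by
    intro k d
    induction k with
    | zero => congr 2; simp
    | succ k ih =>
      refine Eq.trans ?_ ((hper _).trans ih)
      congr 3; push_cast; ring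
  have hN : (0 : ℤ) < T.N m := by exact_mod_cast T.N_pos m
  rw [eq_top_iff]
  rintro a -
  obtain ⟨⟨f, hf⟩, rfl⟩ := T.π_surj m a
  induction hf using Submodule.span_induction with
  | mem f h =>
    obtain ⟨d, rfl⟩ := h
    have h1 := Int.emod_nonneg d hN.ne'
    have h2 := Int.emod_lt_of_pos d hN
    refine Submodule.subset_span ⟨⟨(d % T.N m).toNat, by omega⟩, ?_⟩
    have h3 := Int.emod_add_mul_ediv d (T.N m)
    simp only
    rcases le_total 0 (d / (T.N m : ℤ)) with h | h
    · obtain ⟨k, hk⟩ := Int.eq_ofNat_of_zero_le h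
      rw [← hperk k]
      congr 3
      rw [← hk]; rw [Int.toNat_of_nonneg h1]; linarith
    · obtain ⟨k, hk⟩ := Int.eq_ofNat_of_zero_le (neg_nonneg.2 h)
      rw [← hperk k d]
      congr 3
      rw [← hk]; rw [Int.toNat_of_nonneg h1]; linarith
  | zero => exact zero_mem _
  | add f g hf hg h1 h2 => exact add_mem h1 h2
  | smul a f hf h => exact Submodule.smul_mem _ a h

/-- The zeros of `z` at level `m` are `n` simple `F`-rational points: evaluation at them is onto
`Fⁿ`, and its kernel consists of the multiples of `z`. -/
lemma exists_ev (m : ℕ) : ∃ n ≤ T.N m, ∃ ev : T.U m →ₐ[F] (Fin n → F), Function.Surjective ev ∧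
    ∀ f : T.U m, ev f = 0 ↔ ∃ h ∈ T.U m, (f : K) = T.z * h := by
  have hfin : Module.Finite F (T.Q m) :=
    ⟨Submodule.fg_def.2 ⟨_, Set.finite_range _, T.Q_span m⟩⟩
  obtain ⟨n, hn, ⟨e⟩⟩ := exists_equiv_pi_of_pow_card F (T.Q m) (T.Q_pow_card m)
  refine ⟨n, ?_, e.toAlgHom.comp (T.π m), e.surjective.comp (T.π_surj m), fun f => ?_⟩
  · have := finrank_range_le_card (R := F) fun d : Fin (T.N m) =>
      T.π m ⟨T.E m (d : ℕ), T.E_mem m _⟩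
    rw [Set.finrank, Q_span, finrank_top, ← hn] at this
    simpa using this
  · rw [← π_eq_zero]
    exact map_eq_zero_iff e e.injective

end GSTower

/-! ### Riemann–Roch spaces -/

open Filter

namespace GSTower

variable {F K : Type*} [Field F] [Fintype F] [Field K] [Algebra F K] (T : GSTower F K)

/-- Every element of `U m` is regular at a place where `w 0` is a unit. -/
lemma U_le_of_unit {A : ValuationSubring K} (hw : T.w 0 ∈ A) (hi : (T.w 0)⁻¹ ∈ A) {m : ℕ} {f : K}
    (hf : f ∈ T.U m) : f ∈ A := by
  have key : ∀ j, T.w j ∈ A ∧ (T.w j)⁻¹ ∈ A := by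
    intro j
    induction j with
    | zero => exact ⟨hw, hi⟩
    | succ j ih =>
      have hx : T.x j ∈ A := T.mem_of_as (T.hx j) ih.1
      have hxi : (T.x j)⁻¹ ∈ A := by
        rw [inv_x_eq]; exact mul_mem (add_mem (one_mem _) (pow_mem hx _)) ih.2
      constructor
      · rw [w_succ_eq, div_eq_mul_inv]
        exact sub_mem hx (mul_mem (pow_mem hx _) ih.2)
      · rw [inv_w_succ_eq, ← inv_pow]
        exact add_mem hxi (pow_mem hxi _)
  have hE : ∀ m d, T.E m d ∈ A := by
    intro m
    induction m with
    | zero =>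
      intro d
      rw [E]
      rcases d with d | d
      · simpa using pow_mem hw d
      · rw [zpow_negSucc, ← inv_pow]; exact pow_mem hi _
    | succ m ih =>
      intro d
      exact mul_mem (ih _) (pow_mem (T.mem_of_as (T.hx m) (key m).1) _)
  induction hf using Submodule.span_induction with
  | mem f h => obtain ⟨d, rfl⟩ := h; exact hE m d
  | zero => exact zero_mem A
  | add f g hf hg h1 h2 => exact add_mem h1 h2
  | smul a f hf h => exact T.smul_mem A a h

lemma γ_pos (m : ℕ) : 0 < T.γ m := zero_lt_one.trans (T.one_lt_γ m)

lemma γ_zpow_inj (m : ℕ) {d e : ℤ} (h : T.γ m ^ d = T.γ m ^ e) : d = e :=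
  (zpow_right_strictMono₀ (T.one_lt_γ m)).injective h

lemma γ_zpow_le (m : ℕ) {d e : ℤ} : T.γ m ^ d ≤ T.γ m ^ e ↔ d ≤ e :=
  (zpow_right_strictMono₀ (T.one_lt_γ m)).le_iff_le

lemma γ_zpow_lt (m : ℕ) {d e : ℤ} : T.γ m ^ d < T.γ m ^ e ↔ d < e :=
  (zpow_right_strictMono₀ (T.one_lt_γ m)).lt_iff_lt

/-- The elements `E m d` have pairwise different valuations at infinity, so the largest one
dominates. -/
lemma val_sum (m : ℕ) (a : ℤ → F) (t : Finset ℤ) : (∀ d ∈ t, a d = 0) ∨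
    ∃ d ∈ t, T.Ainf.valuation (∑ d ∈ t, a d • T.E m d) = T.γ m ^ d := by
  classical
  induction t using Finset.induction_on_max with
  | empty => simp
  | insert D s hs ih =>
    have hD : D ∉ s := fun h => lt_irrefl _ (hs D h)
    rw [Finset.sum_insert hD]
    by_cases h0 : a D = 0
    · rw [h0, zero_smul, zero_add]
      rcases ih with ih | ⟨d, hd, e⟩
      · left; simpa [h0] using ih
      · exact Or.inr ⟨d, Finset.mem_insert_of_mem hd, e⟩
    · right
      refine ⟨D, Finset.mem_insert_self _ _, ?_⟩
      have h1 : T.Ainf.valuation (a D • T.E m D) = T.γ m ^ D := by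
        rw [Algebra.smul_def, map_mul, T.const_val _ h0, one_mul, val_E]
      rcases ih with ih | ⟨d, hd, e⟩
      · rw [Finset.sum_eq_zero (fun d hd => by rw [ih d hd, zero_smul]), add_zero, h1]
      · rw [Valuation.map_add_eq_of_lt_left, h1]
        rw [e, h1]
        exact (T.γ_zpow_lt m).2 (hs d hd)

lemma E_linearIndependent (m : ℕ) : LinearIndependent F (T.E m) := by
  rw [linearIndependent_iff']
  intro t a h
  rcases T.val_sum m a t with h1 | ⟨d, hd, e⟩
  · exact h1
  · rw [h, map_zero] at e
    exact absurd e.symm (zpow_ne_zero _ (T.γ_pos m).ne')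

lemma val_of_mem_span (m : ℕ) {s : Set ℤ} {g : K} (hg : g ∈ Submodule.span F (T.E m '' s))
    (h0 : g ≠ 0) : ∃ d ∈ s, T.Ainf.valuation g = T.γ m ^ d := by
  obtain ⟨l, hl, rfl⟩ := (Finsupp.mem_span_image_iff_linearCombination F).1 hg
  rw [Finsupp.linearCombination_apply, Finsupp.sum] at *
  rcases T.val_sum m l l.support with h1 | ⟨d, hd, e⟩
  · exact absurd (Finset.sum_eq_zero (fun d hd => by rw [h1 d hd, zero_smul])) h0
  · exact ⟨d, hl hd, e⟩

lemma val_of_mem_U {m : ℕ} {g : K} (hg : g ∈ T.U m) (h0 : g ≠ 0) :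
    ∃ d : ℤ, T.Ainf.valuation g = T.γ m ^ d := by
  obtain ⟨d, -, h⟩ := T.val_of_mem_span m (s := Set.univ) (g := g) (by rw [Set.image_univ]; exact hg) h0
  exact ⟨d, h⟩

/-- The ring of functions of the `m`-th level regular away from infinity. -/
def R (m : ℕ) : Subalgebra F K where
  carrier := {f | f ∈ T.U m ∧ ∀ A : ValuationSubring K, T.w 0 ∈ A → f ∈ A}
  algebraMap_mem' a := ⟨algebraMap_mem _ a, fun A _ => T.const_mem A a⟩
  add_mem' hf hg := ⟨add_mem hf.1 hg.1, fun A hA => add_mem (hf.2 A hA) (hg.2 A hA)⟩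
  mul_mem' hf hg := ⟨mul_mem hf.1 hg.1, fun A hA => mul_mem (hf.2 A hA) (hg.2 A hA)⟩

lemma R_le_U (m : ℕ) : T.R m ≤ T.U m := fun _ h => h.1

lemma mem_R_of_Z {m : ℕ} {f : K} (hU : f ∈ T.U m) (hS : ∀ A ∈ T.Z 0, f ∈ A) : f ∈ T.R m := by
  refine ⟨hU, fun A hA => ?_⟩
  rcases ((A.valuation_le_one_iff _).2 hA).lt_or_eq with h | h
  · exact hS A ⟨h, fun i hi => absurd hi (Nat.not_lt_zero _)⟩
  · refine T.U_le_of_unit hA ?_ hU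
    rw [← A.valuation_le_one_iff, map_inv₀, h, inv_one]

lemma mem_R_of_z_mul {m : ℕ} {h : K} (hU : h ∈ T.U m) (hz : T.z * h ∈ T.R m) : h ∈ T.R m := by
  refine T.mem_R_of_Z hU fun A hA => ?_
  have h1 : A.valuation T.z = 1 := by
    have h3 := T.three_le
    have : A.valuation (T.w 0 ^ (T.r - 1)) < A.valuation (-1 : K) := by
      rw [Valuation.map_neg, map_one, map_pow]
      exact pow_lt_one₀ zero_le hA.1 (by omega)
    rw [z, sub_eq_add_neg, Valuation.map_add_eq_of_lt_right _ this, Valuation.map_neg, map_one]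
  have h2 := hz.2 A (Z.w_mem hA)
  rwa [← A.valuation_le_one_iff, map_mul, h1, one_mul, A.valuation_le_one_iff] at h2

/-- The span of the `E m d` with `d ≥ -D`. -/
def V (m D : ℕ) : Submodule F K := Submodule.span F (T.E m '' {d | -(D : ℤ) ≤ d})

lemma V_mono (m : ℕ) : Monotone (T.V m) := fun D D' h =>
  Submodule.span_mono (Set.image_mono fun d (hd : -(D : ℤ) ≤ d) => by
    change -(D' : ℤ) ≤ d; omega)

lemma P_mul_V {m D : ℕ} {p f : K} (hp : p ∈ T.P) (hf : f ∈ T.V m D) : p * f ∈ T.V m D := by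
  have hw : ∀ f ∈ T.V m D, f * T.w 0 ∈ T.V m D := by
    intro f hf
    have := Submodule.mem_map_of_mem (f := LinearMap.mulRight F (T.w 0)) hf
    rw [V, Submodule.map_span] at this
    refine Submodule.span_mono ?_ this
    rintro _ ⟨_, ⟨d, hd, rfl⟩, rfl⟩
    refine ⟨d + T.r ^ m, ?_, T.E_add m d⟩
    have : (0 : ℤ) ≤ T.r ^ m := by positivity
    simp only [Set.mem_ofPred_eq] at *
    linarith
  induction hp using Algebra.adjoin_induction generalizing f with
  | mem x hx => rw [Set.mem_singleton_iff.1 hx, mul_comm]; exact hw f hf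
  | algebraMap a => rw [← Algebra.smul_def]; exact Submodule.smul_mem _ a hf
  | add p q _ _ h1 h2 => rw [add_mul]; exact add_mem (h1 hf) (h2 hf)
  | mul p q _ _ h1 h2 => rw [mul_assoc]; exact h1 (h2 hf)

lemma exists_mem_V {m : ℕ} {f : K} (hf : f ∈ T.U m) : ∃ D, f ∈ T.V m D := by
  induction hf using Submodule.span_induction with
  | mem f h =>
    obtain ⟨d, rfl⟩ := h
    exact ⟨d.natAbs, Submodule.subset_span ⟨d, by simp only [Set.mem_ofPred_eq]; omega, rfl⟩⟩
  | zero => exact ⟨0, zero_mem _⟩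
  | add f g hf hg h1 h2 =>
    obtain ⟨D, h1⟩ := h1
    obtain ⟨D', h2⟩ := h2
    exact ⟨max D D', add_mem (T.V_mono m (le_max_left _ _) h1) (T.V_mono m (le_max_right _ _) h2)⟩
  | smul a f hf h => obtain ⟨D, h⟩ := h; exact ⟨D, Submodule.smul_mem _ a h⟩

/-- Functions regular away from infinity are integral over `F[w_0]`. -/
lemma R_integral {m : ℕ} {f : K} (hf : f ∈ T.R m) : IsIntegral T.P f := by
  have h1 : f ∈ (⨅ V : {V : ValuationSubring K // (T.P : Set K) ⊆ V.toSubring}, V.1.toSubring) := by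
    rw [Subring.mem_iInf]
    rintro ⟨A, hA⟩
    exact hf.2 A (hA T.w_mem_P)
  rw [iInf_valuationSubring_superset] at h1
  obtain ⟨p, hp, hpf⟩ : IsIntegral (Subring.closure (T.P : Set K)) f := h1
  have hle : Subring.closure (T.P : Set K) ≤ T.P.toSubring := Subring.closure_le.2 fun _ h => h
  refine ⟨p.map (Subring.inclusion hle), hp.map _, ?_⟩
  rw [Polynomial.eval₂_map]
  exact hpf

/-- A function without poles that vanishes at infinity is zero. Being integral over `F[w_0]`, `f` has
all its powers in one `V m D`, whose elements vanish at infinity to order at most `D`. -/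
lemma eq_zero_of_val_lt_one {m : ℕ} {f : K} (hf : f ∈ T.R m) (hv : T.Ainf.valuation f < 1) :
    f = 0 := by
  classical
  by_contra h0
  obtain ⟨s, hs⟩ := (T.R_integral hf).fg_adjoin_singleton
  have hsU : ∀ g ∈ s, g ∈ T.U m := by
    intro g hg
    have h1 : g ∈ Algebra.adjoin T.P {f} := by
      rw [← Subalgebra.mem_toSubmodule, ← hs]; exact Submodule.subset_span hg
    clear hg
    induction h1 using Algebra.adjoin_induction with
    | mem x hx => rw [Set.mem_singleton_iff.1 hx]; exact hf.1
    | algebraMap a =>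
      have : T.P ≤ T.U m := Algebra.adjoin_le (by
        rintro _ rfl; exact T.w_mem_U (Nat.zero_le _))
      exact this a.2
    | add p q _ _ h1 h2 => exact add_mem h1 h2
    | mul p q _ _ h1 h2 => exact mul_mem h1 h2
  obtain ⟨D, hD⟩ : ∃ D, ∀ g ∈ s, g ∈ T.V m D := by
    clear hs
    induction s using Finset.induction_on with
    | empty => exact ⟨0, by simp⟩
    | insert g s _ ih =>
      obtain ⟨D, hD⟩ := ih fun g hg => hsU g (Finset.mem_insert_of_mem hg)
      obtain ⟨D', hD'⟩ := T.exists_mem_V (hsU g (Finset.mem_insert_self _ _))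
      refine ⟨max D D', fun g' hg' => ?_⟩
      rcases Finset.mem_insert.1 hg' with rfl | hg'
      · exact T.V_mono m (le_max_right _ _) hD'
      · exact T.V_mono m (le_max_left _ _) (hD _ hg')
  have hpow : f ^ (D + 1) ∈ T.V m D := by
    have h1 : f ^ (D + 1) ∈ Subalgebra.toSubmodule (Algebra.adjoin T.P {f}) :=
      pow_mem (Algebra.subset_adjoin (Set.mem_singleton f)) _
    rw [← hs] at h1
    generalize f ^ (D + 1) = g at h1
    induction h1 using Submodule.span_induction with
    | mem g h => exact hD g h
    | zero => exact zero_mem _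
    | add f g hf hg h1 h2 => exact add_mem h1 h2
    | smul a g hf h => rw [Algebra.smul_def]; exact T.P_mul_V a.2 h
  obtain ⟨e, he, h2⟩ := T.val_of_mem_span m hpow (pow_ne_zero _ h0)
  obtain ⟨d, hd⟩ := T.val_of_mem_U hf.1 h0
  rw [hd] at hv
  have hd0 : d < 0 := by rwa [← T.γ_zpow_lt m, zpow_zero]
  rw [map_pow, hd, ← zpow_natCast, ← zpow_mul] at h2
  have h3 := T.γ_zpow_inj m h2
  simp only [Set.mem_ofPred_eq] at he
  push_cast at h3
  nlinarith

/-- The Riemann–Roch space of functions regular away from infinity, with a pole of order at most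
`t` there. -/
def RL (m : ℕ) (t : ℤ) : Submodule F K where
  carrier := {f | f ∈ T.R m ∧ T.Ainf.valuation f ≤ T.γ m ^ t}
  zero_mem' := ⟨zero_mem _, by rw [map_zero]; exact zero_le⟩
  add_mem' {f g} hf hg := ⟨add_mem hf.1 hg.1, Valuation.map_add_le _ hf.2 hg.2⟩
  smul_mem' a f hf := by
    refine ⟨Subalgebra.smul_mem _ hf.1 a, ?_⟩
    rw [Algebra.smul_def, map_mul]
    exact (mul_le_of_le_one_left zero_le
      ((T.Ainf.valuation_le_one_iff _).2 (T.const_mem _ a))).trans hf.2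

lemma γ_zero (m : ℕ) : T.γ 0 = T.γ m ^ T.r ^ m := by
  induction m with
  | zero => simp
  | succ m ih => rw [ih, ← γ_succ_pow, ← pow_mul, pow_succ']

lemma val_z (m : ℕ) : T.Ainf.valuation T.z = T.γ m ^ (T.N m : ℤ) := by
  have h3 := T.three_le
  have h1 : T.Ainf.valuation (T.w 0 ^ (T.r - 1)) = T.γ m ^ (T.N m : ℤ) := by
    rw [map_pow, zpow_natCast, N, mul_comm, pow_mul, ← γ_zero]; rfl
  rw [z, sub_eq_add_neg, Valuation.map_add_eq_of_lt_left, h1]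
  rw [Valuation.map_neg, map_one, map_pow]
  exact one_lt_pow₀ (T.one_lt_γ 0) (by omega)

lemma z_ne : T.z ≠ 0 := by
  intro h
  have := T.val_z 0
  rw [h, map_zero] at this
  exact (zpow_ne_zero _ (T.γ_pos 0).ne') this.symm

/-- Division by `z` lowers the pole order at infinity by `N m` and creates no new poles. -/
lemma div_z_mem {m : ℕ} {t : ℤ} {h : K} (hU : h ∈ T.U m) (hz : T.z * h ∈ T.RL m t) :
    h ∈ T.RL m (t - T.N m) := by
  refine ⟨T.mem_R_of_z_mul hU hz.1, ?_⟩
  have := hz.2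
  have h0 := zpow_pos (T.γ_pos m) (T.N m : ℤ)
  rwa [map_mul, T.val_z m, mul_comm, ← le_div_iff₀ h0, ← zpow_sub₀ (T.γ_pos m).ne'] at this

lemma RL_neg {m : ℕ} {t : ℤ} (ht : t < 0) {f : K} (hf : f ∈ T.RL m t) : f = 0 := by
  refine T.eq_zero_of_val_lt_one hf.1 (hf.2.trans_lt ?_)
  rwa [← zpow_zero (T.γ m), T.γ_zpow_lt m]

/-- Lower half of Riemann–Roch, with `r ^ m` in the role of the genus. -/
lemma RL_finrank (m : ℕ) (t : ℕ) [FiniteDimensional F (T.RL m t)] :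
    t + 1 ≤ Module.finrank F (T.RL m t) + T.r ^ m := by
  obtain ⟨N, hN⟩ := (T.codim_Z m 0).exists
  simp only [zero_add] at hN
  obtain ⟨ι, _, φ, hc, -, hφ⟩ := hN
  -- among the `E m d` with `-N * r ^ m ≤ d ≤ t`, the space `RL m t` is cut out by
  -- `(N + 1) * r ^ m` conditions
  set I : Finset ℤ := Finset.Icc (-(N : ℤ) * T.r ^ m) t with hI
  set M : Submodule F K := Submodule.span F (Set.range fun d : I => T.E m d) with hM
  have hMfin : FiniteDimensional F M := FiniteDimensional.span_of_finite F (Set.finite_range _)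
  have hMrank : Module.finrank F M = I.card := by
    have := finrank_span_eq_card ((T.E_linearIndependent m).comp (fun d : I => (d : ℤ))
      Subtype.val_injective)
    rw [Fintype.card_coe] at this
    exact this
  have hIc : I.card = t + 1 + N * T.r ^ m := by
    rw [hI, Int.card_Icc]
    have : (0 : ℤ) ≤ (N : ℤ) * T.r ^ m := by positivity
    zify
    rw [Int.toNat_of_nonneg]
    · ring
    · linarith
  have hML : M ≤ T.Lam m T.x N := by
    refine Submodule.span_le.2 ?_
    rintro _ ⟨⟨d, hd⟩, rfl⟩
    exact T.E_mem_Lam m N (Finset.mem_Icc.1 hd).1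
  have hMU : M ≤ T.USub m := by
    refine Submodule.span_le.2 ?_
    rintro _ ⟨d, rfl⟩
    exact T.E_mem m d
  have hMv : ∀ f ∈ M, T.Ainf.valuation f ≤ T.γ m ^ (t : ℤ) := by
    intro f hf
    by_cases h0 : f = 0
    · rw [h0, map_zero]; exact zero_le
    have hf' : f ∈ Submodule.span F (T.E m '' (I : Set ℤ)) := by
      rw [hM] at hf
      refine Submodule.span_mono ?_ hf
      rintro _ ⟨d, rfl⟩
      exact ⟨d, d.2, rfl⟩
    obtain ⟨d, hd, e⟩ := T.val_of_mem_span m hf' h0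
    rw [e, T.γ_zpow_le m]
    exact (Finset.mem_Icc.1 (Finset.mem_coe.1 hd)).2
  set ψ := φ.comp M.subtype with hψ
  have hker : Module.finrank F (LinearMap.ker ψ) ≤ Module.finrank F (T.RL m t) := by
    let j : LinearMap.ker ψ →ₗ[F] T.RL m t :=
      LinearMap.codRestrict _ (M.subtype.comp (LinearMap.ker ψ).subtype) fun f =>
        ⟨T.mem_R_of_Z (hMU f.1.2) (hφ _ (hML f.1.2) f.2), hMv _ f.1.2⟩
    refine LinearMap.finrank_le_finrank_of_injective (f := j) ?_
    intro a b hab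
    exact Subtype.ext (Subtype.ext (congrArg (fun f : T.RL m t => (f : K)) hab))
  have hrange : Module.finrank F (LinearMap.range ψ) ≤ (N + 1) * T.r ^ m := by
    refine (Submodule.finrank_le _).trans ?_
    rw [Module.finrank_fintype_fun_eq_card]
    exact hc
  have := LinearMap.finrank_range_add_finrank_ker ψ
  rw [hMrank, hIc] at this
  have h3 : (N + 1) * T.r ^ m = N * T.r ^ m + T.r ^ m := by ring
  omega

end GSTower

/-! ### Codes -/

/-- A code of dimension at most `k` is determined by at most `k` coordinates. -/
lemma exists_information_set {F : Type*} [Field F] {n : ℕ} (k : ℕ) :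
    ∀ W : Submodule F (Fin n → F), Module.finrank F W ≤ k →
      ∃ Q : Finset (Fin n), Q.card ≤ k ∧ ∀ w ∈ W, (∀ i ∈ Q, w i = 0) → w = 0 := by
  classical
  induction k with
  | zero =>
    intro W hW
    refine ⟨∅, le_rfl, fun w hw _ => ?_⟩
    rw [Submodule.finrank_eq_zero.1 (Nat.le_zero.1 hW)] at hw
    exact (Submodule.mem_bot F).1 hw
  | succ k ih =>
    intro W hW
    by_cases hbot : W = ⊥
    · refine ⟨∅, Nat.zero_le _, fun w hw _ => ?_⟩
      rw [hbot] at hw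
      exact (Submodule.mem_bot F).1 hw
    obtain ⟨w, hw, hw0⟩ := Submodule.exists_mem_ne_zero_of_ne_bot hbot
    obtain ⟨i, hi⟩ := Function.ne_iff.1 hw0
    have hlt : W ⊓ LinearMap.ker (LinearMap.proj (R := F) (φ := fun _ : Fin n => F) i) < W := by
      refine lt_of_le_of_ne inf_le_left fun h => hi ?_
      rw [← h] at hw
      exact hw.2
    have := Submodule.finrank_lt_finrank_of_lt hlt
    obtain ⟨Q, hQ, h⟩ := ih _ (Nat.le_of_lt_succ (this.trans_le hW))
    refine ⟨insert i Q, (Finset.card_insert_le _ _).trans (by omega), fun v hv hv0 => ?_⟩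
    exact h v ⟨hv, hv0 i (Finset.mem_insert_self _ _)⟩
      fun j hj => hv0 j (Finset.mem_insert_of_mem hj)

namespace GSTower

variable {F K : Type*} [Field F] [Fintype F] [Field K] [Algebra F K] (T : GSTower F K)

/-- The inclusion of a Riemann–Roch space into `U m`. -/
def toU (m : ℕ) (t : ℤ) : T.RL m t →ₗ[F] T.U m where
  toFun f := ⟨f, T.R_le_U m f.2.1⟩
  map_add' _ _ := rfl
  map_smul' _ _ := rfl

@[simp] lemma coe_toU {m : ℕ} {t : ℤ} (f : T.RL m t) : (T.toU m t f : K) = f := rfl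

section

variable {m n : ℕ} (ev : T.U m →ₐ[F] (Fin n → F))

lemma ev_injective
    (hev : ∀ f : T.U m, ev f = 0 ↔ ∃ h ∈ T.U m, (f : K) = T.z * h)
    {t : ℤ} (ht : t < T.N m) :
    Function.Injective (ev.toLinearMap.comp (T.toU m t)) := by
  rw [← LinearMap.ker_eq_bot, LinearMap.ker_eq_bot']
  intro f hf
  obtain ⟨h, hU, e⟩ := (hev _).1 hf
  have : T.z * h ∈ T.RL m t := by rw [← e]; exact f.2
  have h0 := T.RL_neg (by omega) (T.div_z_mem hU this)
  rw [h0, mul_zero] at e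
  exact Subtype.ext e

lemma RL_finite
    (hev : ∀ f : T.U m, ev f = 0 ↔ ∃ h ∈ T.U m, (f : K) = T.z * h)
    {t : ℤ} (ht : t < T.N m) : FiniteDimensional F (T.RL m t) :=
  FiniteDimensional.of_injective _ (T.ev_injective ev hev ht)

lemma RL_finrank_le
    (hev : ∀ f : T.U m, ev f = 0 ↔ ∃ h ∈ T.U m, (f : K) = T.z * h)
    {t : ℤ} (ht : t < T.N m) : Module.finrank F (T.RL m t) ≤ n := by
  simpa using LinearMap.finrank_le_finrank_of_injective (T.ev_injective ev hev ht)

/-- The functions in `RL m a` vanishing at the points of `Q`. -/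
def Van (a : ℤ) (Q : Finset (Fin n)) : Submodule F (T.RL m a) :=
  LinearMap.ker ((LinearMap.funLeft F F (Subtype.val : Q → Fin n)).comp
    (ev.toLinearMap.comp (T.toU m a)))

lemma mem_Van {a : ℤ} {Q : Finset (Fin n)} {v : T.RL m a} :
    v ∈ T.Van ev a Q ↔ ∀ i ∈ Q, ev (T.toU m a v) i = 0 := by
  rw [Van, LinearMap.mem_ker, funext_iff]
  exact ⟨fun h i hi => h ⟨i, hi⟩, fun h i => h i i.2⟩

lemma Van_finrank {a : ℤ} [FiniteDimensional F (T.RL m a)] (Q : Finset (Fin n)) :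
    Module.finrank F (T.RL m a) ≤ Module.finrank F (T.Van ev a Q) + Q.card := by
  have h := LinearMap.finrank_range_add_finrank_ker
    ((LinearMap.funLeft F F (Subtype.val : Q → Fin n)).comp (ev.toLinearMap.comp (T.toU m a)))
  have h2 := Submodule.finrank_le (LinearMap.range
    ((LinearMap.funLeft F F (Subtype.val : Q → Fin n)).comp (ev.toLinearMap.comp (T.toU m a))))
  rw [Module.finrank_fintype_fun_eq_card, Fintype.card_coe] at h2
  rw [Van]
  omega

/-- The codeword map: at points of `Q`, where `v` vanishes, the value of `v` is replaced by the
leading coefficient `v / z`, which is made sense of by means of a function `e` equal to `1` on `Q`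
and to `0` at the other points. -/
lemma exists_codeword
    (hev : ∀ f : T.U m, ev f = 0 ↔ ∃ h ∈ T.U m, (f : K) = T.z * h)
    (hsurj : Function.Surjective ev) {a : ℤ} (ha : a < T.N m)
    (Q : Finset (Fin n)) :
    ∃ c : T.Van ev a Q →ₗ[F] (Fin n → F), Function.Injective c ∧ ∀ v : T.Van ev a Q,
      (∀ i ∉ Q, c v i = ev (T.toU m a v) i) ∧
      ∃ e h : T.U m, T.toU m a v * e = ⟨T.z, T.z_mem_U m⟩ * h ∧ (∀ i ∈ Q, ev e i = 1) ∧
        ∀ i ∈ Q, c v i = ev h i := by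
  classical
  obtain ⟨e, he⟩ := hsurj fun i => if i ∈ Q then 1 else 0
  have h1 : ∀ v : T.Van ev a Q, (v : K) * e / T.z ∈ T.U m := by
    intro v
    have h0 : ev (T.toU m a v * e) = 0 := by
      funext i
      rw [map_mul, Pi.mul_apply, he]
      by_cases hi : i ∈ Q
      · rw [(T.mem_Van ev).1 v.2 i hi, zero_mul]; rfl
      · simp [hi]
    obtain ⟨h, hU, e'⟩ := (hev _).1 h0
    have : (v : K) * e = T.z * h := e'
    rwa [this, mul_div_cancel_left₀ _ T.z_ne]
  let H : T.Van ev a Q →ₗ[F] T.U m :=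
    { toFun := fun v => ⟨(v : K) * e / T.z, h1 v⟩
      map_add' := fun v v' => Subtype.ext (by
        change ((v : K) + (v' : K)) * e / T.z = (v : K) * e / T.z + (v' : K) * e / T.z
        ring)
      map_smul' := fun b v => Subtype.ext (by
        change (b • (v : K)) * e / T.z = b • ((v : K) * e / T.z)
        rw [smul_mul_assoc, smul_div_assoc]) }
  let c : T.Van ev a Q →ₗ[F] (Fin n → F) :=
    LinearMap.pi fun i => if i ∈ Q then (LinearMap.proj i).comp (ev.toLinearMap.comp H)
      else (LinearMap.proj i).comp
        (ev.toLinearMap.comp ((T.toU m a).comp (T.Van ev a Q).subtype))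
  have hc1 : ∀ v, ∀ i ∉ Q, c v i = ev (T.toU m a v) i := by
    intro v i hi
    simp only [c, LinearMap.pi_apply, if_neg hi]; rfl
  have hc2 : ∀ v, ∀ i ∈ Q, c v i = ev (H v) i := by
    intro v i hi
    simp only [c, LinearMap.pi_apply, if_pos hi]; rfl
  refine ⟨c, ?_, fun v => ⟨hc1 v, e, H v, ?_, ?_, hc2 v⟩⟩
  · refine fun v v' hvv => Subtype.ext (T.ev_injective ev hev ha ?_)
    funext i
    by_cases hi : i ∈ Q
    · exact ((T.mem_Van ev).1 v.2 i hi).trans ((T.mem_Van ev).1 v'.2 i hi).symm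
    · exact (hc1 v i hi).symm.trans ((congrFun hvv i).trans (hc1 v' i hi))
  · refine Subtype.ext ?_
    change (v : K) * e = T.z * ((v : K) * e / T.z)
    rw [mul_div_cancel₀ _ T.z_ne]
  · intro i hi
    rw [he]; simp [hi]

end

/-- Two mutually intersecting codes from `RL m a`. Let `Q` be an information set for `RL m t`, split
into halves `Q₁` and `Q₂`, and let the two codes come from the functions vanishing on `Q₁` and on
`Q₂` respectively. If the supports of two codewords were disjoint, the product of the functions
would be `z * h` with `h ∈ RL m t` vanishing on `Q`, hence zero. -/
lemma exists_codes_aux (m : ℕ) : ∃ n ≤ T.N m,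
    (∀ t : ℕ, t < T.N m → FiniteDimensional F (T.RL m t) ∧ Module.finrank F (T.RL m t) ≤ T.N m) ∧
    ∀ t a : ℕ, t < T.N m → a < T.N m → 2 * a ≤ T.N m + t →
    ∃ C C' : Submodule F (Fin n → F), MutuallyIntersecting C C' ∧
      2 * Module.finrank F (T.RL m a) ≤ 2 * Module.finrank F C + Module.finrank F (T.RL m t) + 1 ∧
      2 * Module.finrank F (T.RL m a) ≤
        2 * Module.finrank F C' + Module.finrank F (T.RL m t) + 1 := by
  classical
  obtain ⟨n, hn, ev, hsurj, hev⟩ := T.exists_ev m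
  refine ⟨n, hn, fun t ht => ⟨T.RL_finite ev hev (by exact_mod_cast ht),
    (T.RL_finrank_le ev hev (by exact_mod_cast ht)).trans hn⟩, fun t a ht ha hta => ?_⟩
  have ht' : (t : ℤ) < T.N m := by exact_mod_cast ht
  have ha' : (a : ℤ) < T.N m := by exact_mod_cast ha
  have := T.RL_finite ev hev ht'
  have := T.RL_finite ev hev ha'
  obtain ⟨Q, hQ, hinfo⟩ := exists_information_set (Module.finrank F (T.RL m t))
    (LinearMap.range (ev.toLinearMap.comp (T.toU m t)))
    (LinearMap.finrank_range_le _)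
  obtain ⟨Q₁, hQ₁, hc₁⟩ := Finset.exists_subset_card_eq (s := Q) (n := Q.card / 2) (by omega)
  set Q₂ := Q \ Q₁ with hQ₂
  have hc₂ : Q₂.card = Q.card - Q.card / 2 := by rw [hQ₂, Finset.card_sdiff_of_subset hQ₁, hc₁]
  obtain ⟨c₁, hi₁, h₁⟩ := T.exists_codeword ev hev hsurj ha' Q₁
  obtain ⟨c₂, hi₂, h₂⟩ := T.exists_codeword ev hev hsurj ha' Q₂
  refine ⟨LinearMap.range c₁, LinearMap.range c₂, ?_, ?_, ?_⟩
  · rintro _ ⟨v, rfl⟩ hv _ ⟨v', rfl⟩ hv'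
    by_contra hcon
    push Not at hcon
    have hmul : ∀ i, c₁ v i * c₂ v' i = 0 := by
      intro i
      by_cases h : c₁ v i = 0
      · rw [h, zero_mul]
      · rw [hcon i h, mul_zero]
    obtain ⟨hv1, e₁, g₁, hg₁, he₁, hcg₁⟩ := h₁ v
    obtain ⟨hv2, e₂, g₂, hg₂, he₂, hcg₂⟩ := h₂ v'
    have hev0 : ev (T.toU m a v * T.toU m a v') = 0 := by
      funext i
      rw [map_mul, Pi.mul_apply]
      by_cases hi1 : i ∈ Q₁
      · rw [(T.mem_Van ev).1 v.2 i hi1, zero_mul]; rfl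
      by_cases hi2 : i ∈ Q₂
      · rw [(T.mem_Van ev).1 v'.2 i hi2, mul_zero]; rfl
      rw [← hv1 i hi1, ← hv2 i hi2, hmul]; rfl
    obtain ⟨h, hU, e⟩ := (hev _).1 hev0
    have hRL2 : T.z * h ∈ T.RL m (a + a) := by
      rw [← e]
      refine ⟨mul_mem v.1.2.1 v'.1.2.1, ?_⟩
      change T.Ainf.valuation ((v : K) * (v' : K)) ≤ _
      rw [map_mul, zpow_add₀ (T.γ_pos m).ne']
      exact mul_le_mul' v.1.2.2 v'.1.2.2
    have hRL : h ∈ T.RL m t := by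
      have h3 := T.div_z_mem hU hRL2
      exact ⟨h3.1, h3.2.trans ((T.γ_zpow_le m).2 (by omega))⟩
    set zU : T.U m := ⟨T.z, T.z_mem_U m⟩ with hzU
    have hz0 : zU ≠ 0 := fun h => T.z_ne (congrArg Subtype.val h)
    have eU : T.toU m a v * T.toU m a v' = zU * ⟨h, hU⟩ := Subtype.ext e
    -- on `Q₁` the quotient `h` takes the value of the product of the two codewords
    have hQ1 : ∀ i ∈ Q₁, ev ⟨h, hU⟩ i = 0 := by
      intro i hi
      have hi2 : i ∉ Q₂ := by rw [hQ₂]; simp [hi]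
      have h4 : (⟨h, hU⟩ : T.U m) * e₁ = g₁ * T.toU m a v' := by
        refine mul_left_cancel₀ hz0 ?_
        rw [← mul_assoc, ← eU, mul_right_comm, hg₁, mul_assoc]
      have h5 := congrFun (congrArg ev h4) i
      rw [map_mul, map_mul, Pi.mul_apply, Pi.mul_apply, he₁ i hi, mul_one, ← hcg₁ i hi,
        ← hv2 i hi2, hmul] at h5
      exact h5
    have hQ2 : ∀ i ∈ Q₂, ev ⟨h, hU⟩ i = 0 := by
      intro i hi
      have hi1 : i ∉ Q₁ := by rw [hQ₂] at hi; exact (Finset.mem_sdiff.1 hi).2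
      have h4 : (⟨h, hU⟩ : T.U m) * e₂ = T.toU m a v * g₂ := by
        refine mul_left_cancel₀ hz0 ?_
        rw [← mul_assoc, ← eU, mul_assoc, hg₂, mul_left_comm]
      have h5 := congrFun (congrArg ev h4) i
      rw [map_mul, map_mul, Pi.mul_apply, Pi.mul_apply, he₂ i hi, mul_one, ← hcg₂ i hi,
        ← hv1 i hi1, hmul] at h5
      exact h5
    have hh0 : ev ⟨h, hU⟩ = 0 := by
      refine hinfo _ ⟨⟨h, hRL⟩, rfl⟩ fun i hi => ?_
      by_cases hi1 : i ∈ Q₁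
      · exact hQ1 i hi1
      · exact hQ2 i (Finset.mem_sdiff.2 ⟨hi, hi1⟩)
    have hh : h = 0 := by
      have := T.ev_injective ev hev ht' (a₁ := ⟨h, hRL⟩) (a₂ := 0) (by rw [map_zero]; exact hh0)
      exact congrArg Subtype.val this
    have hvv : (v : K) * (v' : K) = 0 := by
      have : (v : K) * (v' : K) = T.z * h := e
      rw [this, hh, mul_zero]
    rcases mul_eq_zero.1 hvv with h0 | h0
    · exact hv (by rw [show v = 0 from Subtype.ext (Subtype.ext h0), map_zero])
    · exact hv' (by rw [show v' = 0 from Subtype.ext (Subtype.ext h0), map_zero])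
  · rw [LinearMap.finrank_range_of_inj hi₁]
    have := T.Van_finrank ev (a := a) Q₁
    omega
  · rw [LinearMap.finrank_range_of_inj hi₂]
    have := T.Van_finrank ev (a := a) Q₂
    omega

/-- For `t < a` with `2 * a` close to `N + t`, the codes above have twice their dimension at least
about `2 * l(a) - l(t)`, where `l` is the dimension of `RL m`. Along a sequence of degrees `t j` the
quantity `l(t j) - t j` stays in an interval of length at most `2 * N`, so in one of the first `J`
steps it falls by at most `2 * N / J`, and for that step `2 * l(a) - l(t) ≥ N - r ^ m - 2 * N / J`. -/
lemma exists_codes (m J : ℕ) (hJ : 0 < J) : ∃ n ≤ T.N m, ∃ C C' : Submodule F (Fin n → F),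
    MutuallyIntersecting C C' ∧
    (T.N m : ℝ) - T.r ^ m - 1 - 2 * T.N m / J ≤ 2 * Module.finrank F C ∧
    (T.N m : ℝ) - T.r ^ m - 1 - 2 * T.N m / J ≤ 2 * Module.finrank F C' := by
  obtain ⟨n, hn, hfin, hcodes⟩ := T.exists_codes_aux m
  have hN := T.N_pos m
  -- the degrees `t j` approach `N m` by halving the remaining gap
  obtain ⟨t, ht0, ht1⟩ : ∃ t : ℕ → ℕ, t 0 = 0 ∧ ∀ j, t (j + 1) = (T.N m + t j) / 2 :=
    ⟨fun j => Nat.rec 0 (fun _ s => (T.N m + s) / 2) j, rfl, fun _ => rfl⟩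
  have ht : ∀ j, t j < T.N m := by
    intro j
    induction j with
    | zero => rw [ht0]; exact hN
    | succ j ih => rw [ht1]; omega
  obtain ⟨l, hl⟩ : ∃ l : ℕ → ℕ, ∀ j, Module.finrank F (T.RL m (t j)) = l j :=
    ⟨_, fun _ => rfl⟩
  let δ : ℕ → ℝ := fun j => l j - t j
  have hG : (T.r ^ m : ℝ) ≤ T.N m := by
    have : T.r ^ m ≤ T.N m := Nat.le_mul_of_pos_left _ (by have := T.three_le; omega)
    exact_mod_cast this
  have hlow : ∀ j, 1 - (T.r ^ m : ℝ) ≤ δ j := by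
    intro j
    have := (hfin _ (ht j)).1
    have h := T.RL_finrank m (t j)
    rw [hl] at h
    have h' : (t j : ℝ) + 1 ≤ l j + T.r ^ m := by exact_mod_cast h
    simp only [δ]; linarith
  have hup : δ 0 ≤ T.N m := by
    have h : (l 0 : ℝ) ≤ T.N m := by rw [← hl]; exact_mod_cast (hfin _ (ht 0)).2
    have : (0 : ℝ) ≤ t 0 := Nat.cast_nonneg _
    simp only [δ]; linarith
  have hJ' : (0 : ℝ) < J := by exact_mod_cast hJ
  obtain ⟨j, hj⟩ : ∃ j, δ j - 2 * T.N m / J ≤ δ (j + 1) := by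
    by_contra hcon
    push Not at hcon
    have h : ∀ k : ℕ, δ k ≤ δ 0 - k * (2 * T.N m / J) := by
      intro k
      induction k with
      | zero => simp
      | succ k ih => have := hcon k; push_cast; linarith
    have h1 := h J
    rw [mul_div_cancel₀ _ hJ'.ne'] at h1
    have := hlow J
    linarith
  obtain ⟨C, C', hMI, h1, h2⟩ := hcodes (t j) (t (j + 1)) (ht j) (ht (j + 1)) (by rw [ht1]; omega)
  rw [hl, hl] at h1 h2
  have h1' : 2 * (l (j + 1) : ℝ) ≤ 2 * Module.finrank F C + l j + 1 := by exact_mod_cast h1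
  have h2' : 2 * (l (j + 1) : ℝ) ≤ 2 * Module.finrank F C' + l j + 1 := by exact_mod_cast h2
  have h3 : (T.N m : ℝ) + t j ≤ 2 * t (j + 1) + 1 := by
    have : T.N m + t j ≤ 2 * t (j + 1) + 1 := by rw [ht1]; omega
    exact_mod_cast this
  have h4 := hlow (j + 1)
  simp only [δ] at hj h4
  exact ⟨n, hn, C, C', hMI, by linarith, by linarith⟩

end GSTower

/-! ### Existence of the tower and asymptotics -/

open Filter

/-- The tower exists over every finite field whose order is a square at least `9`. -/
lemma GSTower.exists_tower (F : Type*) [Field F] [Fintype F] (s : ℕ) (hs : Fintype.card F = s ^ 2)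
    (h3 : 3 ≤ s) : ∃ T : GSTower F (AlgebraicClosure (RatFunc F)), T.r = s := by
  set K := AlgebraicClosure (RatFunc F)
  obtain ⟨p, hp⟩ := CharP.exists F
  obtain ⟨k, hpp, hk⟩ := FiniteField.card F p
  have : Fact p.Prime := ⟨hpp⟩
  obtain ⟨a, -, ha⟩ := (Nat.dvd_prime_pow hpp).1
    (show s ∣ p ^ (k : ℕ) by rw [← hk, hs]; exact dvd_pow_self s two_ne_zero)
  have : CharP K p := charP_of_injective_algebraMap (algebraMap F K).injective p
  have hroot : ∀ c : K, ∃ y : K, y ^ s + y = c := by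
    intro c
    have hdeg : (Polynomial.X ^ s + Polynomial.X - Polynomial.C c : Polynomial K).degree ≠ 0 := by
      have h1 : (Polynomial.X - Polynomial.C c : Polynomial K).degree < s := by
        rw [Polynomial.degree_X_sub_C]; exact_mod_cast (by omega : 1 < s)
      rw [add_sub_assoc, Polynomial.degree_add_eq_left_of_degree_lt
        (by rwa [Polynomial.degree_X_pow]), Polynomial.degree_X_pow]
      exact_mod_cast (by omega : s ≠ 0)
    obtain ⟨y, hy⟩ := IsAlgClosed.exists_root _ hdeg
    refine ⟨y, ?_⟩
    rw [← sub_eq_zero]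
    simpa [Polynomial.IsRoot] using hy
  choose ρ hρ using hroot
  set τ : K := algebraMap (RatFunc F) K RatFunc.X with hτ
  have hτtr : Transcendental F τ :=
    (transcendental_algebraMap_iff (algebraMap (RatFunc F) K).injective).2 RatFunc.transcendental_X
  have hτ0 : τ ≠ 0 := fun h => hτtr (by rw [h]; exact isAlgebraic_zero)
  let w : ℕ → K := fun j => Nat.rec τ (fun _ c => ρ c ^ (s + 1) / c) j
  have hw0 : w 0 = τ := rfl
  have hw1 : ∀ j, w (j + 1) = ρ (w j) ^ (s + 1) / w j := fun _ => rfl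
  have hwne : ∀ j, w j ≠ 0 := by
    intro j
    induction j with
    | zero => exact hτ0
    | succ j ih =>
      rw [hw1]
      refine div_ne_zero (pow_ne_zero _ fun h => ih ?_) ih
      rw [← hρ (w j), h, zero_pow (by omega), zero_add]
  refine ⟨⟨s, h3, hs, fun b c => by rw [ha]; exact add_pow_char_pow b c p a, fun j => ρ (w j), w,
    fun j => hρ _, fun j => by rw [hw1, div_mul_cancel₀ _ (hwne j)], hwne, ?_⟩, rfl⟩
  -- an element contained in all valuation rings would be integral over the constants
  by_contra hcon
  push Not at hcon
  have h1 : τ ∈ (⨅ V : {V : ValuationSubring K // ((⊥ : Subalgebra F K) : Set K) ⊆ V.toSubring},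
      V.1.toSubring) := by
    rw [Subring.mem_iInf]
    rintro ⟨A, hA⟩
    exact hcon A
  rw [iInf_valuationSubring_superset] at h1
  obtain ⟨P, hP, hPτ⟩ : IsIntegral (Subring.closure ((⊥ : Subalgebra F K) : Set K)) τ := h1
  have hle : Subring.closure ((⊥ : Subalgebra F K) : Set K) ≤ (⊥ : Subalgebra F K).toSubring :=
    Subring.closure_le.2 fun _ h => h
  have hint : IsIntegral (⊥ : Subalgebra F K) τ := by
    refine ⟨P.map (Subring.inclusion hle), hP.map _, ?_⟩
    rw [Polynomial.eval₂_map]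
    exact hPτ
  exact hτtr (isIntegral_trans τ hint).isAlgebraic

/-- Let `q ≥ 9` be a prime power which is a perfect square.  Then there is a sequence
of pairs `(Cᵢ, Cᵢ')` of mutually intersecting linear codes over `F_q`, of common
lengths `nᵢ → ∞`, whose rates are both asymptotically at least
`1/2 − 1/(2(q^{1/2} − 1))`. -/
theorem exists_mutually_intersecting_sequence_balanced
    (q : ℕ) (hq : IsPrimePow q) (hsq : ∃ s : ℕ, q = s ^ 2) (hq9 : 9 ≤ q)
    (F : Type*) [Field F] [Fintype F] (hF : Fintype.card F = q) :
    ∃ (n : ℕ → ℕ) (C C' : ∀ i : ℕ, Submodule F (Fin (n i) → F)),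
      Filter.Tendsto n Filter.atTop Filter.atTop ∧
      (∀ i, MutuallyIntersecting (C i) (C' i)) ∧
      (1 : ℝ) / 2 - 1 / (2 * (Real.sqrt q - 1)) ≤
        Filter.liminf (fun i => (Module.finrank F (C i) : ℝ) / n i) Filter.atTop ∧
      (1 : ℝ) / 2 - 1 / (2 * (Real.sqrt q - 1)) ≤
        Filter.liminf (fun i => (Module.finrank F (C' i) : ℝ) / n i) Filter.atTop := by
  obtain ⟨s, rfl⟩ := hsq
  have h3 : 3 ≤ s := by nlinarith
  obtain ⟨T, hT⟩ := GSTower.exists_tower F s hF h3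
  choose n hn C C' hMI h1 h2 using fun i : ℕ => T.exists_codes i (i + 1) (Nat.succ_pos i)
  have h3' : (3 : ℝ) ≤ s := by exact_mod_cast h3
  have hsqrt : Real.sqrt ((s ^ 2 : ℕ) : ℝ) = s := by
    push_cast; exact Real.sqrt_sq (by positivity)
  rw [hsqrt]
  set N : ℕ → ℝ := fun i => T.N i with hNdef
  have hNeq : ∀ i, N i = ((s : ℝ) - 1) * s ^ i := by
    intro i
    simp only [hNdef, GSTower.N, hT]
    rw [Nat.cast_mul, Nat.cast_sub (by omega), Nat.cast_pow, Nat.cast_one]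
  have hNpos : ∀ i, 0 < N i := fun i => by simp only [hNdef]; exact_mod_cast T.N_pos i
  have hNtop : Tendsto N atTop atTop := by
    rw [show N = fun i => ((s : ℝ) - 1) * s ^ i from funext hNeq]
    exact (tendsto_pow_atTop_atTop_of_one_lt (by linarith)).const_mul_atTop (by linarith)
  -- the guaranteed rate at level `i`
  set L : ℝ := (1 : ℝ) / 2 - 1 / (2 * ((s : ℝ) - 1)) with hL
  set b : ℕ → ℝ := fun i => L - 1 / 2 * (N i)⁻¹ - 1 / ((i : ℝ) + 1) with hb
  have hLpos : 0 < L := by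
    have : 1 / (2 * ((s : ℝ) - 1)) < 1 / 2 := one_div_lt_one_div_of_lt (by norm_num) (by linarith)
    rw [hL]; linarith
  have hblim : Tendsto b atTop (nhds L) := by
    have e1 := (tendsto_inv_atTop_zero.comp hNtop).const_mul (1 / 2 : ℝ)
    have e2 := tendsto_one_div_add_atTop_nhds_zero_nat (𝕜 := ℝ)
    simpa [hb] using (tendsto_const_nhds (x := L)).sub e1 |>.sub e2
  have hbN : ∀ i, 2 * (b i * N i) = (T.N i : ℝ) - T.r ^ i - 1 - 2 * T.N i / ((i + 1 : ℕ) : ℝ) := by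
    intro i
    change 2 * (b i * N i) = N i - T.r ^ i - 1 - 2 * N i / ((i + 1 : ℕ) : ℝ)
    have e1 : (T.r : ℝ) ^ i = N i / (s - 1) := by
      rw [hT, hNeq, mul_div_cancel_left₀]; linarith
    have e2 : (s : ℝ) - 1 ≠ 0 := by linarith
    have e3 : (i : ℝ) + 1 ≠ 0 := by positivity
    have e4 := (hNpos i).ne'
    rw [e1]
    simp only [hb, hL]
    push_cast
    field_simp
  have hrate : ∀ (D : ∀ i, Submodule F (Fin (n i) → F)),
      (∀ i, b i * N i ≤ Module.finrank F (D i)) →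
      L ≤ liminf (fun i => (Module.finrank F (D i) : ℝ) / n i) atTop := by
    intro D hD
    have hDn : ∀ i, Module.finrank F (D i) ≤ n i := fun i => by
      simpa using Submodule.finrank_le (D i)
    rw [← hblim.liminf_eq]
    refine liminf_le_liminf (Eventually.of_forall fun i => ?_) hblim.isBoundedUnder_ge ?_
    · refine ((le_div_iff₀ (hNpos i)).2 (hD i)).trans ?_
      rcases (n i).eq_zero_or_pos with h0 | h0
      · have : Module.finrank F (D i) = 0 := by have := hDn i; omega
        simp [this]
      · exact div_le_div_of_nonneg_left (Nat.cast_nonneg _) (by exact_mod_cast h0)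
          (by simp only [hNdef]; exact_mod_cast hn i)
    · refine IsBoundedUnder.isCoboundedUnder_ge ⟨1, ?_⟩
      refine eventually_map.2 (Eventually.of_forall fun i => ?_)
      exact div_le_one_of_le₀ (by exact_mod_cast hDn i) (Nat.cast_nonneg _)
  have hC : ∀ i, b i * N i ≤ Module.finrank F (C i) := fun i => by
    have := h1 i; have := hbN i; linarith
  have hC' : ∀ i, b i * N i ≤ Module.finrank F (C' i) := fun i => by
    have := h2 i; have := hbN i; linarith
  refine ⟨n, C, C', ?_, hMI, hrate C hC, hrate C' hC'⟩
  rw [← tendsto_natCast_atTop_iff (R := ℝ)]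
  refine tendsto_atTop_mono (fun i => (hC i).trans ?_) (hblim.pos_mul_atTop hLpos hNtop)
  have : Module.finrank F (C i) ≤ n i := by simpa using Submodule.finrank_le (C i)
  exact_mod_cast this
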